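/- arXiv:1005.0715 — 2 statements merged into one kernel-verified Lean document; each statement's English description precedes it below -/
import Mathlib

section
/- The alternating group A_5 satisfies the rewriting property P_8; that is, for every sequence of 8 elements x_1, x_2, ..., x_8 of A_5 there exists a non-identity permutation σ of {1,...,8} such that x_1 x_2 ⋯ x_8 = x_{σ(1)} x_{σ(2)} ⋯ x_{σ(8)}. -/
/-- A group `G` has the rewriting property `Pₙ` if every sequence of `n` elements
can be rewritten by some non-identity permutation of its factors. -/
def RewProp (G : Type*) [Group G] (n : ℕ) : Prop :=
  ∀ x : Fin n → G, ∃ σ : Equiv.Perm (Fin n), σ ≠ 1 ∧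
    (List.ofFn x).prod = (List.ofFn (x ∘ σ)).prod

namespace A5Rewrite

noncomputable section

/-- Call-by-value application: kernel reduction passes the literal value of `a` to `k`. -/
def force {β : Type} (a : Nat) (k : Nat → β) : β :=
  Nat.rec (motive := fun _ => β) (k 0) (fun n _ => k n) (Nat.add a 1)

/-- Five-tuples. -/
inductive R5 (α : Type) : Type
  | mk (a b c d e : α) : R5 α

/-- Three rows of a bit-sliced `5 × 5` permutation matrix. -/
inductive V3 : Type
  | mk (r s t : R5 Nat) : V3

/-- Bit-sliced `5 × 5` permutation matrices. -/
abbrev M5 : Type := R5 (R5 Nat)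

/-- Six bit columns encoding one letter in each lane. -/
inductive C6 : Type
  | mk (a b c d e f : Nat) : C6

/-- An element of `A₅`, given by its code and its action on five-tuples. -/
inductive Letter : Type 1
  | mk (code : Nat) (sel : ∀ α : Type, α → α → α → α → α → R5 α) : Letter

/-- All elements of `A₅`. -/
def letters : List Letter :=
  [.mk 0 fun _ a b c d e => .mk a b c d e,
   .mk 1 fun _ a b c d e => .mk a b d e c,
   .mk 2 fun _ a b c d e => .mk a b e c d,
   .mk 3 fun _ a b c d e => .mk a c b e d,
   .mk 4 fun _ a b c d e => .mk a c d b e,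
   .mk 5 fun _ a b c d e => .mk a c e d b,
   .mk 6 fun _ a b c d e => .mk a d b c e,
   .mk 7 fun _ a b c d e => .mk a d c e b,
   .mk 8 fun _ a b c d e => .mk a d e b c,
   .mk 9 fun _ a b c d e => .mk a e b d c,
   .mk 10 fun _ a b c d e => .mk a e c b d,
   .mk 11 fun _ a b c d e => .mk a e d c b,
   .mk 12 fun _ a b c d e => .mk b a c e d,
   .mk 13 fun _ a b c d e => .mk b a d c e,
   .mk 14 fun _ a b c d e => .mk b a e d c,
   .mk 15 fun _ a b c d e => .mk b c a d e,
   .mk 16 fun _ a b c d e => .mk b c d e a,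
   .mk 17 fun _ a b c d e => .mk b c e a d,
   .mk 18 fun _ a b c d e => .mk b d a e c,
   .mk 19 fun _ a b c d e => .mk b d c a e,
   .mk 20 fun _ a b c d e => .mk b d e c a,
   .mk 21 fun _ a b c d e => .mk b e a c d,
   .mk 22 fun _ a b c d e => .mk b e c d a,
   .mk 23 fun _ a b c d e => .mk b e d a c,
   .mk 24 fun _ a b c d e => .mk c a b d e,
   .mk 25 fun _ a b c d e => .mk c a d e b,
   .mk 26 fun _ a b c d e => .mk c a e b d,
   .mk 27 fun _ a b c d e => .mk c b a e d,
   .mk 28 fun _ a b c d e => .mk c b d a e,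
   .mk 29 fun _ a b c d e => .mk c b e d a,
   .mk 30 fun _ a b c d e => .mk c d a b e,
   .mk 31 fun _ a b c d e => .mk c d b e a,
   .mk 32 fun _ a b c d e => .mk c d e a b,
   .mk 33 fun _ a b c d e => .mk c e a d b,
   .mk 34 fun _ a b c d e => .mk c e b a d,
   .mk 35 fun _ a b c d e => .mk c e d b a,
   .mk 36 fun _ a b c d e => .mk d a b e c,
   .mk 37 fun _ a b c d e => .mk d a c b e,
   .mk 38 fun _ a b c d e => .mk d a e c b,
   .mk 39 fun _ a b c d e => .mk d b a c e,
   .mk 40 fun _ a b c d e => .mk d b c e a,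
   .mk 41 fun _ a b c d e => .mk d b e a c,
   .mk 42 fun _ a b c d e => .mk d c a e b,
   .mk 43 fun _ a b c d e => .mk d c b a e,
   .mk 44 fun _ a b c d e => .mk d c e b a,
   .mk 45 fun _ a b c d e => .mk d e a b c,
   .mk 46 fun _ a b c d e => .mk d e b c a,
   .mk 47 fun _ a b c d e => .mk d e c a b,
   .mk 48 fun _ a b c d e => .mk e a b c d,
   .mk 49 fun _ a b c d e => .mk e a c d b,
   .mk 50 fun _ a b c d e => .mk e a d b c,
   .mk 51 fun _ a b c d e => .mk e b a d c,
   .mk 52 fun _ a b c d e => .mk e b c a d,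
   .mk 53 fun _ a b c d e => .mk e b d c a,
   .mk 54 fun _ a b c d e => .mk e c a b d,
   .mk 55 fun _ a b c d e => .mk e c b d a,
   .mk 56 fun _ a b c d e => .mk e c d a b,
   .mk 57 fun _ a b c d e => .mk e d a c b,
   .mk 58 fun _ a b c d e => .mk e d b a c,
   .mk 59 fun _ a b c d e => .mk e d c b a]

variable {β : Type}

/-- The product of a row vector and a matrix. -/
def rowMul (v : R5 Nat) (M : M5) (k : R5 Nat → β) : β :=
  v.rec fun v0 v1 v2 v3 v4 => M.rec fun r0 r1 r2 r3 r4 =>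
  r0.rec fun a0 b0 c0 d0 e0 => r1.rec fun a1 b1 c1 d1 e1 => r2.rec fun a2 b2 c2 d2 e2 =>
  r3.rec fun a3 b3 c3 d3 e3 => r4.rec fun a4 b4 c4 d4 e4 =>
  force (Nat.lor (Nat.lor (Nat.lor (Nat.lor (Nat.land v0 a0) (Nat.land v1 a1))
    (Nat.land v2 a2)) (Nat.land v3 a3)) (Nat.land v4 a4)) fun a =>
  force (Nat.lor (Nat.lor (Nat.lor (Nat.lor (Nat.land v0 b0) (Nat.land v1 b1))
    (Nat.land v2 b2)) (Nat.land v3 b3)) (Nat.land v4 b4)) fun b =>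
  force (Nat.lor (Nat.lor (Nat.lor (Nat.lor (Nat.land v0 c0) (Nat.land v1 c1))
    (Nat.land v2 c2)) (Nat.land v3 c3)) (Nat.land v4 c4)) fun c =>
  force (Nat.lor (Nat.lor (Nat.lor (Nat.lor (Nat.land v0 d0) (Nat.land v1 d1))
    (Nat.land v2 d2)) (Nat.land v3 d3)) (Nat.land v4 d4)) fun d =>
  force (Nat.lor (Nat.lor (Nat.lor (Nat.lor (Nat.land v0 e0) (Nat.land v1 e1))
    (Nat.land v2 e2)) (Nat.land v3 e3)) (Nat.land v4 e4)) fun e =>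
  k (.mk a b c d e)

def vmul (V : V3) (M : M5) (k : V3 → β) : β :=
  V.rec fun r s t => rowMul r M fun r => rowMul s M fun s => rowMul t M fun t => k (.mk r s t)

def mmul (A M : M5) (k : M5 → β) : β :=
  A.rec fun a b c d e => rowMul a M fun a => rowMul b M fun b => rowMul c M fun c =>
    rowMul d M fun d => rowMul e M fun e => k (.mk a b c d e)

def transpose (M : M5) (k : M5 → β) : β :=
  M.rec fun r0 r1 r2 r3 r4 =>
  r0.rec fun a0 b0 c0 d0 e0 => r1.rec fun a1 b1 c1 d1 e1 => r2.rec fun a2 b2 c2 d2 e2 =>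
  r3.rec fun a3 b3 c3 d3 e3 => r4.rec fun a4 b4 c4 d4 e4 =>
  k (.mk (.mk a0 a1 a2 a3 a4) (.mk b0 b1 b2 b3 b4) (.mk c0 c1 c2 c3 c4) (.mk d0 d1 d2 d3 d4)
    (.mk e0 e1 e2 e3 e4))

def top (M : M5) (k : V3 → β) : β :=
  M.rec fun a b c _ _ => k (.mk a b c)

/-- The lanes on which two rows agree. -/
def rowEq (v w : R5 Nat) : Nat :=
  v.rec fun v0 v1 v2 v3 v4 => w.rec fun w0 w1 w2 w3 w4 =>
    Nat.lor (Nat.lor (Nat.lor (Nat.lor (Nat.land v0 w0) (Nat.land v1 w1)) (Nat.land v2 w2))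
      (Nat.land v3 w3)) (Nat.land v4 w4)

def vecEq (V W : V3) : Nat :=
  V.rec fun r s t => W.rec fun r' s' t' =>
    Nat.land (Nat.land (rowEq r r') (rowEq s s')) (rowEq t t')

/-- The lanes in `v` selected by each of the eight values of three bits. -/
def minterms (v a b c : Nat) (k : Nat → Nat → Nat → Nat → Nat → Nat → Nat → Nat → β) : β :=
  force (Nat.land v a) fun p1 => force (Nat.xor v p1) fun p0 =>
  force (Nat.land p0 b) fun q1 => force (Nat.xor p0 q1) fun q0 =>
  force (Nat.land p1 b) fun q3 => force (Nat.xor p1 q3) fun q2 =>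
  force (Nat.land q0 c) fun r1 => force (Nat.xor q0 r1) fun r0 =>
  force (Nat.land q1 c) fun r3 => force (Nat.xor q1 r3) fun r2 =>
  force (Nat.land q2 c) fun r5 => force (Nat.xor q2 r5) fun r4 =>
  force (Nat.land q3 c) fun r7 => force (Nat.xor q3 r7) fun r6 =>
  k r0 r1 r2 r3 r4 r5 r6 r7

def row (a b c d e : Nat) (k : R5 Nat → β) : β :=
  force a fun a => force b fun b => force c fun c => force d fun d => force e fun e =>
    k (.mk a b c d e)

/-- The bit-sliced permutation matrix of a letter. -/
def decode (v : Nat) (C : C6) (k : M5 → β) : β :=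
  C.rec fun b0 b1 b2 b3 b4 b5 =>
  minterms v b5 b4 b3 fun h0 h1 h2 h3 h4 h5 h6 h7 =>
  minterms v b2 b1 b0 fun l0 l1 l2 l3 l4 l5 l6 l7 =>
  row
        (Nat.lor (Nat.land h0 (Nat.lor (Nat.lor (Nat.lor (Nat.lor (Nat.lor (Nat.lor (Nat.lor l0 l1) l2) l3) l4) l5) l6) l7)) (Nat.land h1 (Nat.lor (Nat.lor (Nat.lor l0 l1) l2) l3)))
        (Nat.lor (Nat.land h1 (Nat.lor (Nat.lor (Nat.lor l4 l5) l6) l7)) (Nat.land h2 (Nat.lor (Nat.lor (Nat.lor (Nat.lor (Nat.lor (Nat.lor (Nat.lor l0 l1) l2) l3) l4) l5) l6) l7)))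
        (Nat.lor (Nat.land h3 (Nat.lor (Nat.lor (Nat.lor (Nat.lor (Nat.lor (Nat.lor (Nat.lor l0 l1) l2) l3) l4) l5) l6) l7)) (Nat.land h4 (Nat.lor (Nat.lor (Nat.lor l0 l1) l2) l3)))
        (Nat.lor (Nat.land h4 (Nat.lor (Nat.lor (Nat.lor l4 l5) l6) l7)) (Nat.land h5 (Nat.lor (Nat.lor (Nat.lor (Nat.lor (Nat.lor (Nat.lor (Nat.lor l0 l1) l2) l3) l4) l5) l6) l7)))
        (Nat.lor (Nat.land h6 (Nat.lor (Nat.lor (Nat.lor (Nat.lor (Nat.lor (Nat.lor (Nat.lor l0 l1) l2) l3) l4) l5) l6) l7)) (Nat.land h7 (Nat.lor (Nat.lor (Nat.lor l0 l1) l2) l3))) fun r0 =>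
  row
        (Nat.lor (Nat.lor (Nat.lor (Nat.land h1 (Nat.lor (Nat.lor l4 l5) l6)) (Nat.land h3 (Nat.lor (Nat.lor l0 l1) l2))) (Nat.land h4 (Nat.lor (Nat.lor l4 l5) l6))) (Nat.land h6 (Nat.lor (Nat.lor l0 l1) l2)))
        (Nat.lor (Nat.lor (Nat.lor (Nat.lor (Nat.land h0 (Nat.lor (Nat.lor l0 l1) l2)) (Nat.land h3 (Nat.lor (Nat.lor l3 l4) l5))) (Nat.land h4 l7)) (Nat.land h5 (Nat.lor l0 l1))) (Nat.land h6 (Nat.lor (Nat.lor l3 l4) l5)))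
        (Nat.lor (Nat.lor (Nat.lor (Nat.lor (Nat.lor (Nat.land h0 (Nat.lor (Nat.lor l3 l4) l5)) (Nat.land h1 l7)) (Nat.land h2 (Nat.lor l0 l1))) (Nat.land h5 (Nat.lor (Nat.lor l2 l3) l4))) (Nat.land h6 (Nat.lor l6 l7))) (Nat.land h7 l0))
        (Nat.lor (Nat.lor (Nat.lor (Nat.lor (Nat.lor (Nat.land h0 (Nat.lor l6 l7)) (Nat.land h1 l0)) (Nat.land h2 (Nat.lor (Nat.lor l2 l3) l4))) (Nat.land h3 (Nat.lor l6 l7))) (Nat.land h4 l0)) (Nat.land h7 (Nat.lor (Nat.lor l1 l2) l3)))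
        (Nat.lor (Nat.lor (Nat.lor (Nat.land h1 (Nat.lor (Nat.lor l1 l2) l3)) (Nat.land h2 (Nat.lor (Nat.lor l5 l6) l7))) (Nat.land h4 (Nat.lor (Nat.lor l1 l2) l3))) (Nat.land h5 (Nat.lor (Nat.lor l5 l6) l7))) fun r1 =>
  row
        (Nat.lor (Nat.lor (Nat.lor (Nat.lor (Nat.lor (Nat.lor (Nat.land h1 l7) (Nat.land h2 (Nat.lor l2 l5))) (Nat.land h3 (Nat.lor l3 l6))) (Nat.land h4 (Nat.lor l1 l7))) (Nat.land h5 (Nat.lor l2 l5))) (Nat.land h6 (Nat.lor l3 l6))) (Nat.land h7 l1))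
        (Nat.lor (Nat.lor (Nat.lor (Nat.lor (Nat.lor (Nat.lor (Nat.land h0 (Nat.lor l3 l6)) (Nat.land h1 l1)) (Nat.land h3 (Nat.lor l0 l7))) (Nat.land h4 (Nat.lor l2 l4))) (Nat.land h5 (Nat.lor l3 l6))) (Nat.land h6 (Nat.lor l0 l7))) (Nat.land h7 l2))
        (Nat.lor (Nat.lor (Nat.lor (Nat.lor (Nat.lor (Nat.lor (Nat.land h0 (Nat.lor l0 l7)) (Nat.land h1 (Nat.lor l2 l4))) (Nat.land h2 (Nat.lor l3 l6))) (Nat.land h4 l5)) (Nat.land h5 (Nat.lor l0 l7))) (Nat.land h6 (Nat.lor l1 l4))) (Nat.land h7 l3))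
        (Nat.lor (Nat.lor (Nat.lor (Nat.lor (Nat.lor (Nat.lor (Nat.land h0 (Nat.lor l1 l4)) (Nat.land h1 (Nat.lor l3 l5))) (Nat.land h2 (Nat.lor l0 l7))) (Nat.land h3 (Nat.lor l1 l4))) (Nat.land h4 l3)) (Nat.land h6 (Nat.lor l2 l5))) (Nat.land h7 l0))
        (Nat.lor (Nat.lor (Nat.lor (Nat.lor (Nat.lor (Nat.land h0 (Nat.lor l2 l5)) (Nat.land h1 (Nat.lor l0 l6))) (Nat.land h2 (Nat.lor l1 l4))) (Nat.land h3 (Nat.lor l2 l5))) (Nat.land h4 (Nat.lor l0 l6))) (Nat.land h5 (Nat.lor l1 l4))) fun r2 =>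
  row
        (Nat.lor (Nat.lor (Nat.lor (Nat.lor (Nat.lor (Nat.land h2 (Nat.lor (Nat.lor l1 l3) l7)) (Nat.land h3 l4)) (Nat.land h4 (Nat.lor l0 l2))) (Nat.land h5 (Nat.lor (Nat.lor l1 l3) l7))) (Nat.land h6 l4)) (Nat.land h7 (Nat.lor l0 l2)))
        (Nat.lor (Nat.lor (Nat.lor (Nat.lor (Nat.lor (Nat.lor (Nat.land h0 l4) (Nat.land h1 (Nat.lor l0 l2))) (Nat.land h3 (Nat.lor l2 l6))) (Nat.land h4 (Nat.lor l3 l5))) (Nat.land h5 (Nat.lor l4 l5))) (Nat.land h6 (Nat.lor l2 l6))) (Nat.land h7 l3))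
        (Nat.lor (Nat.lor (Nat.lor (Nat.lor (Nat.lor (Nat.lor (Nat.land h0 (Nat.lor l2 l6)) (Nat.land h1 (Nat.lor l3 l5))) (Nat.land h2 (Nat.lor l4 l5))) (Nat.land h4 (Nat.lor l6 l7))) (Nat.land h5 l6)) (Nat.land h6 (Nat.lor l0 l5))) (Nat.land h7 l1))
        (Nat.lor (Nat.lor (Nat.lor (Nat.lor (Nat.lor (Nat.land h0 (Nat.lor l0 l5)) (Nat.land h1 (Nat.lor (Nat.lor l1 l6) l7))) (Nat.land h2 l6)) (Nat.land h3 (Nat.lor l0 l5))) (Nat.land h4 l1)) (Nat.land h6 (Nat.lor (Nat.lor l1 l3) l7)))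
        (Nat.lor (Nat.lor (Nat.lor (Nat.lor (Nat.lor (Nat.land h0 (Nat.lor (Nat.lor l1 l3) l7)) (Nat.land h1 l4)) (Nat.land h2 (Nat.lor l0 l2))) (Nat.land h3 (Nat.lor (Nat.lor l1 l3) l7))) (Nat.land h4 l4)) (Nat.land h5 (Nat.lor l0 l2))) fun r3 =>
  row
        (Nat.lor (Nat.lor (Nat.lor (Nat.lor (Nat.lor (Nat.land h2 (Nat.lor (Nat.lor l0 l4) l6)) (Nat.land h3 (Nat.lor l5 l7))) (Nat.land h4 l3)) (Nat.land h5 (Nat.lor (Nat.lor l0 l4) l6))) (Nat.land h6 (Nat.lor l5 l7))) (Nat.land h7 l3))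
        (Nat.lor (Nat.lor (Nat.lor (Nat.lor (Nat.lor (Nat.lor (Nat.land h0 (Nat.lor l5 l7)) (Nat.land h1 l3)) (Nat.land h3 l1)) (Nat.land h4 (Nat.lor (Nat.lor l0 l1) l6))) (Nat.land h5 (Nat.lor l2 l7))) (Nat.land h6 l1)) (Nat.land h7 (Nat.lor l0 l1)))
        (Nat.lor (Nat.lor (Nat.lor (Nat.lor (Nat.lor (Nat.lor (Nat.land h0 l1) (Nat.land h1 (Nat.lor (Nat.lor l0 l1) l6))) (Nat.land h2 (Nat.lor l2 l7))) (Nat.land h4 l4)) (Nat.land h5 (Nat.lor l1 l5))) (Nat.land h6 (Nat.lor l2 l3))) (Nat.land h7 l2))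
        (Nat.lor (Nat.lor (Nat.lor (Nat.lor (Nat.lor (Nat.land h0 (Nat.lor l2 l3)) (Nat.land h1 (Nat.lor l2 l4))) (Nat.land h2 (Nat.lor l1 l5))) (Nat.land h3 (Nat.lor l2 l3))) (Nat.land h4 l2)) (Nat.land h6 (Nat.lor (Nat.lor l0 l4) l6)))
        (Nat.lor (Nat.lor (Nat.lor (Nat.lor (Nat.lor (Nat.land h0 (Nat.lor (Nat.lor l0 l4) l6)) (Nat.land h1 (Nat.lor l5 l7))) (Nat.land h2 l3)) (Nat.land h3 (Nat.lor (Nat.lor l0 l4) l6))) (Nat.land h4 (Nat.lor l5 l7))) (Nat.land h5 l3)) fun r4 =>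
  k (.mk r0 r1 r2 r3 r4)

/-- Tries of vectors indexed by words in block numbers. -/
inductive Tab : Type
  | nil : Tab
  | cons (V : V3) (child next : Tab) : Tab

/-- One level of a trie; `f` builds the subtries. -/
def tabLevel (f : V3 → List (Option M5) → (Tab → β) → β) (T : V3) :
    List (Option M5) → List (Option M5) → (Tab → β) → β
  | _, [], k => k .nil
  | p, none :: s, k => tabLevel f T (none :: p) s fun nx =>
      k (.cons (.mk (.mk 0 0 0 0 0) (.mk 0 0 0 0 0) (.mk 0 0 0 0 0)) .nil nx)
  | p, some B :: s, k => vmul T B fun V => f V (p.reverseAux (none :: s)) fun ch =>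
      tabLevel f T (some B :: p) s fun nx => k (.cons V ch nx)

/-- The trie of products `T B_i B_j ⋯` with at most `d` distinct factors. -/
def mkTab : Nat → V3 → List (Option M5) → (Tab → β) → β
  | 0, _, _, k => k .nil
  | d + 1, T, L, k => tabLevel (mkTab d) T [] L k

/-- The union of `f a l` over all ways to pick an element `a` of a list, leaving `l`. -/
def pick (f : Nat → List Nat → Nat) : List Nat → List Nat → Nat
  | _, [] => 0
  | p, a :: s => Nat.lor (f a (p.reverseAux s)) (pick f (a :: p) s)

def Tab.drop : Nat → Tab → Tab
  | 0, t => t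
  | _ + 1, .nil => .nil
  | n + 1, .cons _ _ t => t.drop n

def leaf (acc : V3) : Nat → Tab → List Nat → Nat
  | 0, _, _ => 0
  | d + 1, t, l => pick (fun i r =>
      match t.drop i with
      | .nil => 0
      | .cons V ch _ =>
        match r with
        | [] => vecEq acc V
        | _ :: _ => leaf acc d ch r) [] l

def withNth (k : M5 → Nat) : Nat → List M5 → Nat
  | _, [] => 0
  | 0, M :: _ => k M
  | n + 1, _ :: L => withNth k n L

def search (Bs : List M5) (s : Nat) (t : Tab) : Nat → V3 → List Nat → Nat
  | 0, acc, l => leaf acc s t l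
  | d + 1, acc, l => pick (fun i r => withNth (fun M => vmul acc M fun acc =>
      search Bs s t d acc r) i Bs) [] l

def vprod : V3 → List M5 → (V3 → β) → β
  | V, [], k => k V
  | V, M :: L, k => vmul V M fun V => vprod V L k

def invs : List M5 → (List (Option M5) → β) → β
  | [], k => k []
  | M :: L, k => transpose M fun M => invs L fun L => k (some M :: L)

/-- The lanes on which some product of all the blocks in a different order, starting with a
different block, equals the product of the blocks. -/
def permTest : List M5 → Nat
  | [] => 0
  | B :: Bs =>
    top B fun V => vprod V Bs fun T => invs (B :: Bs) fun I =>
    mkTab (Nat.min 3 Bs.length) T I fun t =>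
    pick (fun i r => withNth (fun M => top M fun acc =>
      search (B :: Bs) 3 t (Bs.length - 3) acc r) i (B :: Bs)) [0] (List.range' 1 Bs.length)

def wordTest (Bs : List M5) (T : V3) : List Nat → V3 → Nat
  | [], acc => vecEq acc T
  | i :: l, acc => withNth (fun M => vmul acc M fun acc => wordTest Bs T l acc) i Bs

def takeProd (v : Nat) : Nat → M5 → List C6 → (M5 → List C6 → β) → β
  | 0, M, L, k => k M L
  | _ + 1, M, [], k => k M []
  | n + 1, M, C :: L, k => decode v C fun D => mmul M D fun M => takeProd v n M L k

/-- Products of consecutive blocks of letters; `n :: ns` starts with a block of `n + 1` letters. -/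
def mkBlocks (v : Nat) : List Nat → List C6 → (List M5 → β) → β
  | [], _, k => k []
  | _ :: _, [], k => k []
  | n :: ns, C :: L, k => decode v C fun D => takeProd v n D L fun B L =>
      mkBlocks v ns L fun Bs => k (B :: Bs)

/-- A relation `y P = Q y` in the next letter `y`. -/
inductive Rel : Type
  | mk (P : V3) (Q : M5) : Rel

def relsA (D' B : M5) : V3 → M5 → List M5 → List Rel → (List Rel → β) → β
  | _, _, [], acc, k => k acc
  | A, X, M :: L, acc, k => vmul A M fun A => mmul X M fun X => vmul A B fun P =>
      mmul X D' fun Q => relsA D' B A X L (.mk P Q :: acc) k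

def relsB (I D' : M5) : M5 → M5 → List M5 → List Rel → (List Rel → β) → β
  | _, _, [], acc, k => k acc
  | B, X, M :: L, acc, k => top I fun A => relsA D' B A X (M :: L) acc fun acc =>
      mmul B M fun B => mmul X M fun X => relsB I D' B X L acc k

/-- The relations saying that `y D B A` equals `A B y D` for blocks `D`, `B`, `A` of letters. -/
def relsD (I : M5) : M5 → List M5 → List Rel → (List Rel → β) → β
  | _, [], acc, k => k acc
  | D, M :: L, acc, k => transpose D fun D' => relsB I D' I D (M :: L) acc fun acc =>
      mmul D M fun D => relsD I D L acc k

def decodeAll (v : Nat) : Nat → List C6 → (List M5 → β) → β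
  | 0, _, k => k []
  | _ + 1, [], k => k []
  | n + 1, C :: L, k => decode v C fun M => decodeAll v n L fun Ms => k (M :: Ms)

def selRowEq (sel : ∀ α : Type, α → α → α → α → α → R5 α) (p q : R5 Nat) : Nat :=
  q.rec fun a b c d e => rowEq p (sel Nat a b c d e)

def relBit (sel : ∀ α : Type, α → α → α → α → α → R5 α) (r : Rel) : Nat :=
  r.rec fun P Q => P.rec fun p0 p1 p2 => Q.rec fun a b c d e =>
    (sel (R5 Nat) a b c d e).rec fun q0 q1 q2 _ _ =>
      Nat.land (Nat.land (selRowEq sel p0 q0) (selRowEq sel p1 q1)) (selRowEq sel p2 q2)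

def relBits (sel : ∀ α : Type, α → α → α → α → α → R5 α) : List Rel → Nat
  | [] => 0
  | r :: L => Nat.lor (relBit sel r) (relBits sel L)

def push (N x a : Nat) (bit : Nat) (k : Nat → β) : β :=
  force (Nat.lor (Nat.shiftLeft a N) (Nat.mul x (Nat.land bit 1))) k

def pushCode (N x code : Nat) (C : C6) (k : C6 → β) : β :=
  C.rec fun b0 b1 b2 b3 b4 b5 =>
  push N x b0 code fun b0 => push N x b1 (Nat.shiftRight code 1) fun b1 =>
  push N x b2 (Nat.shiftRight code 2) fun b2 => push N x b3 (Nat.shiftRight code 3) fun b3 =>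
  push N x b4 (Nat.shiftRight code 4) fun b4 => push N x b5 (Nat.shiftRight code 5) fun b5 =>
  k (.mk b0 b1 b2 b3 b4 b5)

/-- Appends one batch of `N` lanes for every letter. -/
def newLanes (v N : Nat) (rels : List Rel) :
    List Letter → Nat → C6 → (Nat → C6 → β) → β
  | [], w, C, k => k w C
  | l :: ls, w, C, k => l.rec fun code sel =>
      force (Nat.xor v (Nat.land v (relBits sel rels))) fun x =>
      push N x w 1 fun w => pushCode N x code C fun C => newLanes v N rels ls w C k

def double : Nat → Nat → Nat → (Nat → β) → β
  | 0, _, a, k => k a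
  | n + 1, N, a, k => force (Nat.lor a (Nat.shiftLeft a N)) fun a =>
      force (Nat.add N N) fun N => double n N a k

def mapC6 (f : Nat → (Nat → β) → β) (C : C6) (k : C6 → β) : β :=
  C.rec fun b0 b1 b2 b3 b4 b5 => f b0 fun b0 => f b1 fun b1 => f b2 fun b2 =>
    f b3 fun b3 => f b4 fun b4 => f b5 fun b5 => k (.mk b0 b1 b2 b3 b4 b5)

def mapCols (f : Nat → (Nat → β) → β) : List C6 → (List C6 → β) → β
  | [], k => k []
  | C :: L, k => mapC6 f C fun C => mapCols f L fun L => k (C :: L)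

/-- Binary search for the number of bits of `v`. -/
def bitLen (v : Nat) : Nat → Nat → (Nat → β) → β
  | 0, a, k => force (Nat.add a 1) k
  | n + 1, a, k => force (Nat.add a (Nat.pow 2 n)) fun b =>
      (Nat.beq (Nat.shiftRight v b) 0).rec (bitLen v n b k) (bitLen v n a k)

def extend (ls : List Letter) (N w v : Nat) (cols : List C6) (k : Nat → List C6 → β) : β :=
  row v 0 0 0 0 fun i0 => row 0 v 0 0 0 fun i1 => row 0 0 v 0 0 fun i2 =>
  row 0 0 0 v 0 fun i3 => row 0 0 0 0 v fun i4 =>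
  decodeAll v w cols fun Ms =>
  relsD (.mk i0 i1 i2 i3 i4) (.mk i0 i1 i2 i3 i4) Ms [] fun rels =>
  newLanes v N rels ls 0 (.mk 0 0 0 0 0 0) fun v' C =>
  mapCols (fun c k => force (Nat.land c v) fun c => double 6 N c k) cols fun cols =>
  k v' (C :: cols)

def prefixXor (full : Nat) : Nat → Nat → Nat → (Nat → β) → β
  | 0, _, x, k => k x
  | n + 1, j, x, k => force (Nat.land full (Nat.xor x (Nat.shiftLeft x j))) fun x =>
      force (Nat.add j j) fun j => prefixXor full n j x k

def compressStages (full s : Nat) : Nat → Nat → Nat → Nat → List C6 → (Nat → List C6 → β) → β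
  | 0, _, v, _, cols, k => k v cols
  | n + 1, j, v, m, cols, k => prefixXor full s 1 m fun p => force (Nat.land p v) fun mv =>
      force (Nat.shiftRight mv j) fun sh => force (Nat.xor v mv) fun keep =>
      (Nat.beq (Nat.land keep sh) 0).rec (k v cols)
      ((Nat.beq (Nat.shiftLeft sh j) mv).rec (k v cols)
      (mapCols (fun c k => force (Nat.lor (Nat.land c keep) (Nat.shiftRight (Nat.land c mv) j)) k)
        cols fun cols => force (Nat.lor keep sh) fun v =>
        force (Nat.land m (Nat.xor full p)) fun m => force (Nat.add j j) fun j =>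
        compressStages full s n j v m cols k))

/-- Moves the lanes in `v` to an initial segment. -/
def compress (v : Nat) (cols : List C6) (k : Nat → List C6 → β) : β :=
  bitLen v 24 0 fun L =>
  force (Nat.sub (Nat.shiftLeft 1 L) 1) fun full =>
  bitLen L 5 0 fun s =>
  force (Nat.land full (Nat.shiftLeft (Nat.xor full v) 1)) fun m =>
  compressStages full s s 1 v m cols k

/-- Instructions of a search script: append a letter, discard words that have a nontrivial
rearrangement of blocks or the given rearrangement of letters, compress the lanes. -/
inductive Instr : Type
  | ext (w : Nat)
  | test (ns : List Nat)
  | perm (l : List Nat)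
  | comp

/-- Runs a search script. The lanes in `v` hold the surviving initial words, with their letters in
`cols`, latest first. The result `true` means that no word survives. -/
def run (ls : List Letter) : List Instr → Nat → List C6 → Bool
  | [], v, _ => Nat.beq v 0
  | i :: is, v, cols => (Nat.beq v 0).rec (i.rec
      (fun w => bitLen v 24 0 fun N => (Nat.beq (Nat.shiftRight v N) 0).rec false
        (extend ls N w v cols fun v cols => run ls is v cols))
      (fun ns => mkBlocks v ns cols fun Bs =>
        force (Nat.xor v (Nat.land v (permTest Bs))) fun v => run ls is v cols)
      (fun l => decodeAll v l.length cols fun Bs =>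
        row v 0 0 0 0 fun i0 => row 0 v 0 0 0 fun i1 => row 0 0 v 0 0 fun i2 =>
        vprod (.mk i0 i1 i2) Bs fun T =>
        force (Nat.xor v (Nat.land v (wordTest Bs T l (.mk i0 i1 i2)))) fun v => run ls is v cols)
      (compress v cols fun v cols => run ls is v cols)) true

/-- A script that eliminates all words of length eight with suitable first two letters. -/
def script : List Instr :=
  [.ext 0, .test [0, 0, 0], .comp,
   .ext 0, .test [0, 0, 0], .test [0, 0, 0, 0], .comp,
   .ext 3, .comp, .test [0, 0, 0, 0, 0], .comp,
   .ext 5, .comp, .test [0, 0, 0, 0, 0], .comp, .test [0, 0, 0, 0, 0, 0], .comp,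
   .ext 4, .comp, .test [0, 0, 0, 0, 0], .comp, .test [0, 0, 0, 0, 0, 0], .comp,
   .test [0, 0, 0, 0, 0, 1], .comp,
   .ext 0, .test [0, 0, 0, 0], .comp, .test [0, 0, 0, 0, 0], .comp, .test [0, 0, 0, 0, 0, 0], .comp,
   .test [0, 0, 0, 0, 0, 1], .comp, .test [1, 0, 0, 0, 0, 0], .test [0, 0, 0, 0, 1, 0],
   .test [0, 0, 0, 0, 0, 2], .test [2, 0, 0, 0, 0, 0], .test [0, 0, 0, 0, 1, 1],
   .perm [0, 7, 2, 3, 4, 5, 6, 1], .perm [4, 6, 5, 3, 7, 1, 0, 2], .perm [1, 6, 3, 5, 4, 7, 2, 0]]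

/-- The columns of a list of letter codes, one code per lane. -/
def initCol (l : List Nat) : C6 :=
  let col (j : Nat) := l.foldr (fun c a => 2 * a + (c >>> j) % 2) 0
  .mk (col 0) (col 1) (col 2) (col 3) (col 4) (col 5)

/-- The alternating group on five points. -/
abbrev A5 : Type := alternatingGroup (Fin 5)

theorem force_eq (a : Nat) (k : Nat → β) : force a k = k a := rfl

def R5.get {α : Type} (r : R5 α) (i : Fin 5) : α :=
  r.rec fun a b c d e => ![a, b, c, d, e] i

/-- In lane `n`, the row `v` is contained in the unit row vector with index `c`. -/
def RepRow (n : ℕ) (v : R5 Nat) (c : Fin 5) : Prop :=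
  ∀ j, (v.get j).testBit n = true → c = j

/-- In lane `n`, the matrix `M` is contained in the permutation matrix of `g`. -/
def RepMat (n : ℕ) (M : M5) (g : A5) : Prop :=
  ∀ r, RepRow n (M.get r) (g.1 r)

def RepVec (n : ℕ) (V : V3) (g : A5) : Prop :=
  V.rec fun r s t => RepRow n r (g.1 0) ∧ RepRow n s (g.1 1) ∧ RepRow n t (g.1 2)

theorem repRow_mk {n : ℕ} {a b c d e : Nat} {i : Fin 5} : RepRow n (.mk a b c d e) i ↔
    (a.testBit n = true → i = 0) ∧ (b.testBit n = true → i = 1) ∧ (c.testBit n = true → i = 2) ∧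
    (d.testBit n = true → i = 3) ∧ (e.testBit n = true → i = 4) := by
  simp [RepRow, Fin.forall_fin_succ, R5.get]

theorem repMat_mk {n : ℕ} {a b c d e : R5 Nat} {g : A5} : RepMat n (.mk a b c d e) g ↔
    RepRow n a (g.1 0) ∧ RepRow n b (g.1 1) ∧ RepRow n c (g.1 2) ∧ RepRow n d (g.1 3) ∧
    RepRow n e (g.1 4) := by
  simp [RepMat, Fin.forall_fin_succ, R5.get]

variable {n : ℕ} {Q : β → Prop}

theorem testBit_lor (a b : Nat) : (Nat.lor a b).testBit n = (a.testBit n || b.testBit n) :=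
  Nat.testBit_or a b n

theorem testBit_land (a b : Nat) : (Nat.land a b).testBit n = (a.testBit n && b.testBit n) :=
  Nat.testBit_and a b n

theorem testBit_xor (a b : Nat) : (Nat.xor a b).testBit n = (a.testBit n ^^ b.testBit n) :=
  Nat.testBit_xor a b n

theorem rowMul_entry {v0 v1 v2 v3 v4 a0 a1 a2 a3 a4 : Nat} {c j : Fin 5} {f : Fin 5 → Fin 5}
    (hv : RepRow n (.mk v0 v1 v2 v3 v4) c) (h0 : a0.testBit n = true → f 0 = j)
    (h1 : a1.testBit n = true → f 1 = j) (h2 : a2.testBit n = true → f 2 = j)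
    (h3 : a3.testBit n = true → f 3 = j) (h4 : a4.testBit n = true → f 4 = j)
    (h : (Nat.lor (Nat.lor (Nat.lor (Nat.lor (Nat.land v0 a0) (Nat.land v1 a1))
      (Nat.land v2 a2)) (Nat.land v3 a3)) (Nat.land v4 a4)).testBit n = true) : f c = j := by
  simp only [testBit_lor, testBit_land, Bool.or_eq_true, Bool.and_eq_true] at h
  obtain ⟨k0, k1, k2, k3, k4⟩ := repRow_mk.1 hv
  rcases h with (((⟨h, h'⟩ | ⟨h, h'⟩) | ⟨h, h'⟩) | ⟨h, h'⟩) | ⟨h, h'⟩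
  · exact k0 h ▸ h0 h'
  · exact k1 h ▸ h1 h'
  · exact k2 h ▸ h2 h'
  · exact k3 h ▸ h3 h'
  · exact k4 h ▸ h4 h'

theorem rowMul_ind {v : R5 Nat} {M : M5} {c : Fin 5} {g : A5} {k : R5 Nat → β}
    (hv : RepRow n v c) (hM : RepMat n M g) (h : ∀ w, RepRow n w (g.1 c) → Q (k w)) :
    Q (rowMul v M k) := by
  obtain ⟨v0, v1, v2, v3, v4⟩ := v
  obtain ⟨⟨a0, b0, c0, d0, e0⟩, ⟨a1, b1, c1, d1, e1⟩, ⟨a2, b2, c2, d2, e2⟩,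
    ⟨a3, b3, c3, d3, e3⟩, ⟨a4, b4, c4, d4, e4⟩⟩ := M
  obtain ⟨h0, h1, h2, h3, h4⟩ := repMat_mk.1 hM
  rw [repRow_mk] at h0 h1 h2 h3 h4
  exact h _ (repRow_mk.2
    ⟨rowMul_entry hv h0.1 h1.1 h2.1 h3.1 h4.1,
      rowMul_entry hv h0.2.1 h1.2.1 h2.2.1 h3.2.1 h4.2.1,
      rowMul_entry hv h0.2.2.1 h1.2.2.1 h2.2.2.1 h3.2.2.1 h4.2.2.1,
      rowMul_entry hv h0.2.2.2.1 h1.2.2.2.1 h2.2.2.2.1 h3.2.2.2.1 h4.2.2.2.1,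
      rowMul_entry hv h0.2.2.2.2 h1.2.2.2.2 h2.2.2.2.2 h3.2.2.2.2 h4.2.2.2.2⟩)

theorem vmul_ind {V : V3} {M : M5} {f g : A5} {k : V3 → β}
    (hV : RepVec n V f) (hM : RepMat n M g) (h : ∀ W, RepVec n W (g * f) → Q (k W)) :
    Q (vmul V M k) := by
  obtain ⟨r, s, t⟩ := V
  obtain ⟨hr, hs, ht⟩ := hV
  exact rowMul_ind hr hM fun _ hr => rowMul_ind hs hM fun _ hs => rowMul_ind ht hM fun _ ht =>
    h _ ⟨hr, hs, ht⟩

theorem mmul_ind {A M : M5} {f g : A5} {k : M5 → β}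
    (hA : RepMat n A f) (hM : RepMat n M g) (h : ∀ W, RepMat n W (g * f) → Q (k W)) :
    Q (mmul A M k) := by
  obtain ⟨r, s, t, u, v⟩ := A
  obtain ⟨hr, hs, ht, hu, hv⟩ := repMat_mk.1 hA
  exact rowMul_ind hr hM fun _ hr => rowMul_ind hs hM fun _ hs => rowMul_ind ht hM fun _ ht =>
    rowMul_ind hu hM fun _ hu => rowMul_ind hv hM fun _ hv =>
    h _ (repMat_mk.2 ⟨hr, hs, ht, hu, hv⟩)

theorem transpose_ind {M : M5} {g : A5} {k : M5 → β}
    (hM : RepMat n M g) (h : ∀ W, RepMat n W g⁻¹ → Q (k W)) : Q (transpose M k) := by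
  obtain ⟨⟨a0, b0, c0, d0, e0⟩, ⟨a1, b1, c1, d1, e1⟩, ⟨a2, b2, c2, d2, e2⟩,
    ⟨a3, b3, c3, d3, e3⟩, ⟨a4, b4, c4, d4, e4⟩⟩ := M
  refine h _ ?_
  obtain ⟨h0, h1, h2, h3, h4⟩ := repMat_mk.1 hM
  rw [repRow_mk] at h0 h1 h2 h3 h4
  have key : ∀ {i j : Fin 5} {p : Prop}, (p → g.1 i = j) → p → (g⁻¹ : A5).1 j = i :=
    fun h hp => by simp [← h hp]
  exact repMat_mk.2
    ⟨repRow_mk.2 ⟨key h0.1, key h1.1, key h2.1, key h3.1, key h4.1⟩,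
      repRow_mk.2 ⟨key h0.2.1, key h1.2.1, key h2.2.1, key h3.2.1, key h4.2.1⟩,
      repRow_mk.2 ⟨key h0.2.2.1, key h1.2.2.1, key h2.2.2.1, key h3.2.2.1, key h4.2.2.1⟩,
      repRow_mk.2 ⟨key h0.2.2.2.1, key h1.2.2.2.1, key h2.2.2.2.1, key h3.2.2.2.1,
        key h4.2.2.2.1⟩,
      repRow_mk.2 ⟨key h0.2.2.2.2, key h1.2.2.2.2, key h2.2.2.2.2, key h3.2.2.2.2,
        key h4.2.2.2.2⟩⟩

theorem top_ind {M : M5} {g : A5} {k : V3 → β}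
    (hM : RepMat n M g) (h : ∀ V, RepVec n V g → Q (k V)) : Q (top M k) := by
  obtain ⟨r, s, t, u, v⟩ := M
  obtain ⟨hr, hs, ht, _, _⟩ := repMat_mk.1 hM
  exact h _ ⟨hr, hs, ht⟩

theorem eq_of_rowEq {v w : R5 Nat} {c d : Fin 5} (hv : RepRow n v c) (hw : RepRow n w d)
    (h : (rowEq v w).testBit n = true) : c = d := by
  obtain ⟨v0, v1, v2, v3, v4⟩ := v
  obtain ⟨w0, w1, w2, w3, w4⟩ := w
  simp only [rowEq, repRow_mk, testBit_lor, testBit_land, Bool.or_eq_true,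
    Bool.and_eq_true] at hv hw h
  obtain ⟨h0, h1, h2, h3, h4⟩ := hv
  obtain ⟨k0, k1, k2, k3, k4⟩ := hw
  rcases h with (((⟨h, h'⟩ | ⟨h, h'⟩) | ⟨h, h'⟩) | ⟨h, h'⟩) | ⟨h, h'⟩
  · exact (h0 h).trans (k0 h').symm
  · exact (h1 h).trans (k1 h').symm
  · exact (h2 h).trans (k2 h').symm
  · exact (h3 h).trans (k3 h').symm
  · exact (h4 h).trans (k4 h').symm

theorem eq_one_of_fixes : ∀ g : Equiv.Perm (Fin 5), g ∈ alternatingGroup (Fin 5) →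
    g 0 = 0 → g 1 = 1 → g 2 = 2 → g = 1 := by
  simp only [Equiv.Perm.mem_alternatingGroup]
  decide +kernel

theorem eq_of_agree {f g : A5} (h0 : f.1 0 = g.1 0) (h1 : f.1 1 = g.1 1) (h2 : f.1 2 = g.1 2) :
    f = g := by
  have := eq_one_of_fixes (g⁻¹ * f : A5).1 (g⁻¹ * f).2 (by simp [h0]) (by simp [h1]) (by simp [h2])
  exact (inv_mul_eq_one.1 (Subtype.ext this)).symm

theorem eq_of_vecEq {V W : V3} {f g : A5} (hV : RepVec n V f) (hW : RepVec n W g)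
    (h : (vecEq V W).testBit n = true) : f = g := by
  obtain ⟨r, s, t⟩ := V
  obtain ⟨r', s', t'⟩ := W
  simp only [vecEq, testBit_land, Bool.and_eq_true] at h
  exact eq_of_agree (eq_of_rowEq hV.1 hW.1 h.1.1) (eq_of_rowEq hV.2.1 hW.2.1 h.1.2)
    (eq_of_rowEq hV.2.2 hW.2.2 h.2)

/-- The product of `a` and the factors `b i`, `i ∈ l`, each multiplied on the left. -/
def act (b : ℕ → A5) (l : List ℕ) (a : A5) : A5 :=
  l.foldl (fun a i => b i * a) a

def RepTab (n : ℕ) (b : ℕ → A5) : A5 → ℕ → Tab → Prop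
  | _, _, .nil => True
  | g, i, .cons V ch nx => RepVec n V ((b i)⁻¹ * g) ∧ RepTab n b ((b i)⁻¹ * g) 0 ch ∧
      RepTab n b g (i + 1) nx

theorem repVec_zero (g : A5) :
    RepVec n (.mk (.mk 0 0 0 0 0) (.mk 0 0 0 0 0) (.mk 0 0 0 0 0)) g := by
  simp [RepVec, repRow_mk]

variable {b : ℕ → A5}

theorem getElem?_set_none {p s : List (Option M5)} {o : Option M5} {i : ℕ} {M : M5}
    (h : (p.reverse ++ none :: s)[i]? = some (some M)) :
    (p.reverse ++ o :: s)[i]? = some (some M) := by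
  have : p.reverse ++ none :: s = (p.reverse ++ o :: s).set p.reverse.length none := by simp
  rw [this, List.getElem?_set] at h
  split_ifs at h with h1 <;> simp_all

theorem tabLevel_ind {f : V3 → List (Option M5) → (Tab → β) → β} {T : V3} {g : A5}
    (hT : RepVec n T g)
    (hf : ∀ V g L (k : Tab → β), RepVec n V g →
      (∀ i M, L[i]? = some (some M) → RepMat n M (b i)⁻¹) →
      (∀ t, RepTab n b g 0 t → Q (k t)) → Q (f V L k))
    (s p : List (Option M5)) (k : Tab → β)
    (hL : ∀ i M, (p.reverse ++ s)[i]? = some (some M) → RepMat n M (b i)⁻¹)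
    (h : ∀ t, RepTab n b g p.length t → Q (k t)) : Q (tabLevel f T p s k) := by
  induction s generalizing p k with
  | nil => exact h _ trivial
  | cons o s ih =>
    have hL' : ∀ i M, ((o :: p).reverse ++ s)[i]? = some (some M) → RepMat n M (b i)⁻¹ := by
      simpa using hL
    cases o with
    | none =>
      exact ih (none :: p) _ hL' fun nx hnx => h _ ⟨repVec_zero _, trivial, hnx⟩
    | some B =>
      refine vmul_ind hT (hL p.length B (by simp)) fun V hV => ?_
      refine hf V _ _ _ hV (fun i M hi => hL i M ?_) fun ch hch =>
        ih (some B :: p) _ hL' fun nx hnx => h _ ⟨hV, hch, hnx⟩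
      rw [List.reverseAux_eq] at hi
      exact getElem?_set_none hi

theorem mkTab_ind (d : ℕ) (V : V3) (g : A5) (L : List (Option M5)) (k : Tab → β)
    (hV : RepVec n V g) (hL : ∀ i M, L[i]? = some (some M) → RepMat n M (b i)⁻¹)
    (h : ∀ t, RepTab n b g 0 t → Q (k t)) : Q (mkTab d V L k) := by
  induction d generalizing V g L k with
  | zero => exact h _ trivial
  | succ d ih => exact tabLevel_ind hV (fun V g L k => ih V g L k) L [] k hL h

theorem exists_of_pick {f : Nat → List Nat → Nat} {p s : List Nat}
    (h : (pick f p s).testBit n = true) :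
    ∃ a ∈ s, ∃ r, (a :: r).Perm (p ++ s) ∧ (f a r).testBit n = true := by
  induction s generalizing p with
  | nil => simp [pick] at h
  | cons a s ih =>
    simp only [pick, testBit_lor, Bool.or_eq_true] at h
    rcases h with h | h
    · refine ⟨a, by simp, _, ?_, h⟩
      rw [List.reverseAux_eq]
      exact ((List.reverse_perm p).append_right s).cons a |>.trans List.perm_middle.symm
    · obtain ⟨c, hc, r, hr, h⟩ := ih h
      exact ⟨c, by simp [hc], r, hr.trans List.perm_middle.symm, h⟩

theorem RepTab.drop {g : A5} {t : Tab} (i j : ℕ) (h : RepTab n b g j t) :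
    RepTab n b g (j + i) (t.drop i) := by
  induction i generalizing t j with
  | zero => exact h
  | succ i ih =>
    cases t with
    | nil => trivial
    | cons V ch nx => exact (Nat.add_right_comm j 1 i) ▸ ih (j + 1) h.2.2

theorem exists_of_leaf {d : ℕ} {acc : V3} {a g : A5} {t : Tab} {l : List ℕ}
    (ha : RepVec n acc a) (ht : RepTab n b g 0 t) (h : (leaf acc d t l).testBit n = true) :
    ∃ l', l'.Perm l ∧ act b l' a = g := by
  induction d generalizing t l g with
  | zero => simp [leaf] at h
  | succ d ih =>
    obtain ⟨i, -, r, hr, h⟩ := exists_of_pick h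
    have hi := ht.drop i
    rw [Nat.zero_add] at hi
    revert h hi
    cases t.drop i with
    | nil => simp
    | cons V ch nx =>
      intro h hi
      cases r with
      | nil =>
        refine ⟨[i], hr, ?_⟩
        simp [act, eq_of_vecEq ha hi.1 h]
      | cons c r =>
        obtain ⟨l', hl', e⟩ := ih hi.2.1 h
        refine ⟨l' ++ [i], List.perm_append_singleton i l' |>.trans (hl'.cons i) |>.trans hr, ?_⟩
        rw [act] at e
        simp [act, e]

theorem exists_of_withNth {k : M5 → Nat} {i : ℕ} {L : List M5}
    (h : (withNth k i L).testBit n = true) : ∃ M, L[i]? = some M ∧ (k M).testBit n = true := by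
  induction L generalizing i with
  | nil => simp [withNth] at h
  | cons M L ih =>
    cases i with
    | zero => exact ⟨M, rfl, h⟩
    | succ i => simpa using ih h

theorem exists_of_search {Bs : List M5} {s d : ℕ} {acc : V3} {a g : A5} {t : Tab} {l : List ℕ}
    (hB : ∀ i M, Bs[i]? = some M → RepMat n M (b i)) (ha : RepVec n acc a)
    (ht : RepTab n b g 0 t) (h : (search Bs s t d acc l).testBit n = true) :
    ∃ l', l'.Perm l ∧ act b l' a = g := by
  induction d generalizing acc a l with
  | zero => exact exists_of_leaf ha ht h
  | succ d ih =>
    obtain ⟨i, -, r, hr, h⟩ := exists_of_pick h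
    obtain ⟨M, hM, h⟩ := exists_of_withNth h
    revert h
    refine vmul_ind (Q := fun x : Nat => x.testBit n = true → _) ha (hB i M hM) fun W hW h => ?_
    obtain ⟨l', hl', e⟩ := ih hW h
    exact ⟨i :: l', (hl'.cons i).trans hr, e⟩

theorem vprod_ind {L : List M5} {c : List A5} {V : V3} {g : A5} {k : V3 → β}
    (hV : RepVec n V g) (hL : List.Forall₂ (RepMat n) L c)
    (h : ∀ W, RepVec n W (c.foldl (fun a x => x * a) g) → Q (k W)) : Q (vprod V L k) := by
  induction hL generalizing V g with
  | nil => exact h _ hV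
  | cons hM _ ih => exact vmul_ind hV hM fun W hW => ih hW h

theorem invs_ind {L : List M5} {cs : List A5} {k : List (Option M5) → β}
    (hL : List.Forall₂ (RepMat n) L cs)
    (h : ∀ I : List (Option M5), (∀ (i : ℕ) M, I[i]? = some (some M) →
      ∃ g, cs[i]? = some g ∧ RepMat n M g⁻¹) → Q (k I)) : Q (invs L k) := by
  induction hL generalizing k with
  | nil => exact h _ (by simp)
  | cons hM _ ih =>
    refine transpose_ind hM fun W hW => ih fun I hI => h _ fun i M hi => ?_
    cases i with
    | zero => simp at hi; subst hi; exact ⟨_, rfl, hW⟩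
    | succ i => simpa using hI i M hi

theorem exists_of_permTest {Bs : List M5} {c : List A5} (hB : List.Forall₂ (RepMat n) Bs c)
    (h : (permTest Bs).testBit n = true) :
    ∃ i r, i ≠ 0 ∧ (i :: r).Perm (List.range c.length) ∧
      act (fun i => c.getD i 1) (i :: r) 1 = c.foldl (fun a x => x * a) 1 := by
  have hB' : ∀ i M, Bs[i]? = some M → RepMat n M (c.getD i 1) := by
    intro i M hi
    rw [List.getElem?_eq_some_iff] at hi
    obtain ⟨hi, rfl⟩ := hi
    have := hB.get hi (hB.length_eq ▸ hi)
    rw [List.getD_eq_getElem _ _ (hB.length_eq ▸ hi)]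
    simpa using this
  have hlen := hB.length_eq
  by_contra hne
  revert h
  cases hB with
  | nil => simp [permTest]
  | @cons B x Bs c hx hc =>
    rw [permTest]
    refine top_ind (Q := fun x : Nat => x.testBit n = true → False) hx fun V hV => ?_
    refine vprod_ind (Q := fun x : Nat => x.testBit n = true → False) hV hc fun T hT => ?_
    refine invs_ind (Q := fun x : Nat => x.testBit n = true → False) (.cons hx hc) fun I hI => ?_
    refine mkTab_ind (Q := fun x : Nat => x.testBit n = true → False) (b := fun i => (x :: c).getD i 1)
      _ _ _ _ _ hT (fun i M hi => ?_) fun t ht h => ?_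
    · obtain ⟨g, hg, hM⟩ := hI i M hi
      simpa [List.getD_eq_getElem?_getD, hg] using hM
    obtain ⟨i, hi, r, hr, h⟩ := exists_of_pick h
    obtain ⟨M, hM, h⟩ := exists_of_withNth h
    revert h
    refine top_ind (Q := fun x : Nat => x.testBit n = true → False) (hB' i M hM) fun W hW h => ?_
    obtain ⟨l', hl', e⟩ := exists_of_search hB' hW ht h
    refine hne ⟨i, l', ?_, ?_, ?_⟩
    · rintro rfl; simp at hi
    · refine (hl'.cons i).trans (hr.trans ?_)
      simp only [List.length_cons, Nat.succ_inj] at hlen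
      rw [List.length_cons, List.range_eq_range', List.range'_succ, hlen]
      rfl
    · simpa [act] using e

def Letter.code (l : Letter) : Nat := l.rec fun c _ => c

def Letter.fn (l : Letter) : R5 (Fin 5) := l.rec fun _ sel => sel (Fin 5) 0 1 2 3 4

/-- The letter `l` stands for the element `g`. -/
def Letter.Rep (l : Letter) (g : A5) : Prop := ∀ r, l.fn.get r = g.1 r

def C6.get (C : C6) (i : Fin 6) : Nat := C.rec fun a b c d e f => ![a, b, c, d, e, f] i

def C6.map (f : Nat → Nat) (C : C6) : C6 :=
  C.rec fun a b c d e f' => .mk (f a) (f b) (f c) (f d) (f e) (f f')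

theorem C6.get_map (f : Nat → Nat) (C : C6) (i : Fin 6) : (C.map f).get i = f (C.get i) := by
  fin_cases i <;> rfl

/-- In lane `n`, the column `C` encodes the element `g`. -/
def RepCol (n : ℕ) (C : C6) (g : A5) : Prop :=
  ∃ l ∈ letters, l.Rep g ∧ ∀ i : Fin 6, (C.get i).testBit n = l.code.testBit i

/-- The bit of `a` in lane `n`. -/
def lane (n a : ℕ) : ℕ := (a.testBit n).toNat

theorem lane_lor (a b : Nat) : lane n (Nat.lor a b) = Nat.lor (lane n a) (lane n b) := by
  simp only [lane, testBit_lor]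
  cases a.testBit n <;> cases b.testBit n <;> rfl

theorem lane_land (a b : Nat) : lane n (Nat.land a b) = Nat.land (lane n a) (lane n b) := by
  simp only [lane, testBit_land]
  cases a.testBit n <;> cases b.testBit n <;> rfl

theorem lane_xor (a b : Nat) : lane n (Nat.xor a b) = Nat.xor (lane n a) (lane n b) := by
  simp only [lane, testBit_xor]
  cases a.testBit n <;> cases b.testBit n <;> rfl

def R5.map {α γ : Type} (f : α → γ) (r : R5 α) : R5 γ :=
  r.rec fun a b c d e => .mk (f a) (f b) (f c) (f d) (f e)

theorem R5.get_map {α γ : Type} (f : α → γ) (r : R5 α) (i : Fin 5) :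
    (r.map f).get i = f (r.get i) := by
  fin_cases i <;> rfl

theorem minterms_lane (v a b c : Nat)
    (k : Nat → Nat → Nat → Nat → Nat → Nat → Nat → Nat → β) :
    minterms (lane n v) (lane n a) (lane n b) (lane n c) k =
      minterms v a b c fun r0 r1 r2 r3 r4 r5 r6 r7 => k (lane n r0) (lane n r1) (lane n r2)
        (lane n r3) (lane n r4) (lane n r5) (lane n r6) (lane n r7) := by
  simp only [minterms, force_eq, ← lane_land, ← lane_xor]

theorem row_lane (a b c d e : Nat) (k : R5 Nat → β) :
    row (lane n a) (lane n b) (lane n c) (lane n d) (lane n e) k =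
      row a b c d e fun R => k (R.map (lane n)) := by
  simp only [row, force_eq, R5.map]

theorem decode_lane (v : Nat) (C : C6) (k : M5 → β) :
    decode (lane n v) (C.map (lane n)) k =
      decode v C fun M => k (R5.map (R5.map (lane n)) M) := by
  obtain ⟨b0, b1, b2, b3, b4, b5⟩ := C
  simp only [decode, C6.map, minterms_lane, ← lane_lor, ← lane_land, row_lane, R5.map]

def codeCol (c : Nat) : C6 :=
  .mk (lane 0 c) (lane 1 c) (lane 2 c) (lane 3 c) (lane 4 c) (lane 5 c)

theorem decode_codeCol : ∀ l ∈ letters, ∀ r c,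
    ((decode 1 (codeCol l.code) id).get r).get c ≠ 0 → l.fn.get r = c := by
  decide +kernel

theorem decode_ind {v : Nat} {C : C6} {g : A5} {k : M5 → β} (hv : v.testBit n = true)
    (hC : RepCol n C g) (h : ∀ M, RepMat n M g → Q (k M)) : Q (decode v C k) := by
  have e : decode v C k = k (decode v C id) := rfl
  rw [e]
  obtain ⟨l, hl, hg, hb⟩ := hC
  refine h _ fun r c hc => ?_
  have h1 := decode_lane (n := n) v C id
  have h2 : C.map (lane n) = codeCol l.code := by
    obtain ⟨b0, b1, b2, b3, b4, b5⟩ := C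
    have e (i : Fin 6) := congrArg Bool.toNat (hb i)
    exact congr (congr (congr (congr (congr (congrArg C6.mk (e 0)) (e 1)) (e 2)) (e 3)) (e 4)) (e 5)
  rw [h2, show lane n v = 1 by simp [lane, hv]] at h1
  rw [← hg r]
  refine decode_codeCol l hl r c ?_
  rw [h1, show (decode v C fun M => id (R5.map (R5.map (lane n)) M)) =
    R5.map (R5.map (lane n)) (decode v C id) from rfl, R5.get_map, R5.get_map]
  simp [lane, hc]

variable {x : ℕ → A5}

/-- The product of the elements `x i`, `i ∈ w`. -/
def pr (x : ℕ → A5) (w : List ℕ) : A5 := (w.map x).prod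

/-- In lane `n`, the columns `L` encode the letters `x (k - 1), …, x 0`. -/
def RepCols (x : ℕ → A5) (n : ℕ) : ℕ → List C6 → Prop
  | 0, L => L = []
  | _ + 1, [] => False
  | k + 1, C :: L => RepCol n C (x k) ∧ RepCols x n k L

theorem pr_append (u w : List ℕ) : pr x (u ++ w) = pr x u * pr x w := by simp [pr]

theorem pr_flatten (ws : List (List ℕ)) : pr x ws.flatten = (ws.map (pr x)).prod := by
  induction ws with
  | nil => rfl
  | cons w ws ih => simp [pr_append, ih]

theorem foldl_mul_left {G : Type*} [Monoid G] (l : List G) (g : G) :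
    l.foldl (fun a y => y * a) g = l.reverse.prod * g := by
  induction l generalizing g with
  | nil => simp
  | cons a l ih => simp [ih, mul_assoc]

theorem act_eq (b : ℕ → A5) (l : List ℕ) (g : A5) : act b l g = (l.reverse.map b).prod * g := by
  induction l generalizing g with
  | nil => simp [act]
  | cons a l ih =>
    have := ih (b a * g)
    rw [act] at this ⊢
    simp [this, mul_assoc]

/-- Only the trivial rearrangement of `x 0, …, x 7` preserves the product. -/
def Rigid (x : ℕ → A5) : Prop :=
  ∀ w : List ℕ, w.Perm (List.range 8) → pr x w = pr x (List.range 8) → w = List.range 8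

theorem Rigid.window (hx : Rigid x) {j m : ℕ} (hm : j + m ≤ 8) {w : List ℕ}
    (hw : w.Perm (List.range' j m)) (h : pr x w = pr x (List.range' j m)) :
    w = List.range' j m := by
  have e : List.range 8 = List.range' 0 j ++ (List.range' j m ++ List.range' (j + m) (8 - j - m)) := by
    rw [List.range_eq_range', show List.range' j m = List.range' (0 + 1 * j) m by simp,
      show List.range' (j + m) (8 - j - m) = List.range' ((0 + 1 * j) + 1 * m) (8 - j - m) by simp,
      List.range'_append, List.range'_append]
    congr 1
    omega
  have h1 := hx (List.range' 0 j ++ (w ++ List.range' (j + m) (8 - j - m)))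
    (by rw [e]; exact (hw.append_right _).append_left _)
    (by rw [e]; simp only [pr_append, h])
  rw [e] at h1
  exact List.append_cancel_right (List.append_cancel_left h1)

theorem takeProd_ind {v m : ℕ} {k c : ℕ} {M : M5} {L : List C6} {f : M5 → List C6 → β}
    (hv : v.testBit n = true) (hL : RepCols x n k L) (hc : c ≠ 0)
    (hM : RepMat n M (pr x (List.range' k c)))
    (h : ∀ k' c' M L, k' + c' = k + c → c' ≠ 0 → RepMat n M (pr x (List.range' k' c')) →
      RepCols x n k' L → Q (f M L)) : Q (takeProd v m M L f) := by
  induction m generalizing k c M L with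
  | zero => exact h k c M L rfl hc hM hL
  | succ m ih =>
    cases L with
    | nil => exact h k c M [] rfl hc hM hL
    | cons C L =>
      cases k with
      | zero => cases hL
      | succ k =>
        refine decode_ind hv hL.1 fun D hD => mmul_ind hM hD fun M hM =>
          ih (c := c + 1) hL.2 (by simp) ?_ fun k' c' M L e => h k' c' M L (by omega)
        rwa [show List.range' k (c + 1) = [k] ++ List.range' (k + 1) c by
          simp [List.range'_succ], pr_append, show pr x [k] = x k by simp [pr]]

theorem mkBlocks_ind {v : ℕ} {ns : List ℕ} {k : ℕ} {L : List C6} {f : List M5 → β}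
    (hv : v.testBit n = true) (hL : RepCols x n k L)
    (h : ∀ (Bs : List M5) (ws : List (List ℕ)), List.Forall₂ (RepMat n) Bs (ws.map (pr x)) → [] ∉ ws →
      (∃ j m, j + m = k ∧ ws.reverse.flatten = List.range' j m) → Q (f Bs)) :
    Q (mkBlocks v ns L f) := by
  induction ns generalizing k L f with
  | nil => exact h [] [] .nil (by simp) ⟨k, 0, rfl, rfl⟩
  | cons a ns ih =>
    cases L with
    | nil => exact h [] [] .nil (by simp) ⟨k, 0, rfl, rfl⟩
    | cons C L =>
      cases k with
      | zero => cases hL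
      | succ k =>
        refine decode_ind hv hL.1 fun D hD => takeProd_ind (c := 1) hv hL.2 (by simp)
          (by simpa [pr] using hD) fun k' c' M L e hc hM hL => ih hL fun Bs ws hB hw ⟨j, m, e', hj⟩ =>
          h (M :: Bs) (List.range' k' c' :: ws) (.cons hM hB) ?_ ⟨j, m + c', by omega, ?_⟩
        · simpa [List.range'_eq_nil_iff] using ⟨hc, hw⟩
        · rw [List.reverse_cons, List.flatten_append, hj]
          simp [← e', List.range'_append_1]

theorem Rigid.permTest_eq_false (hx : Rigid x) {Bs : List M5} {ws : List (List ℕ)}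
    (hB : List.Forall₂ (RepMat n) Bs (ws.map (pr x))) (hw : [] ∉ ws) {j m : ℕ} (hm : j + m ≤ 8)
    (hj : ws.reverse.flatten = List.range' j m) : (permTest Bs).testBit n = false := by
  by_contra hf
  obtain ⟨i, r, hi, hp, he⟩ := exists_of_permTest hB (by simpa using hf)
  rw [List.length_map] at hp
  have hil : i < ws.length := by simpa using hp.subset (List.mem_cons_self ..)
  rw [act_eq, foldl_mul_left, mul_one, mul_one, ← List.map_reverse, ← pr_flatten, hj] at he
  set W := ((i :: r).reverse.map fun i => ws.getD i []).flatten with hW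
  have hWe : pr x W = pr x (List.range' j m) := by
    rw [← he, hW, pr_flatten, List.map_map]
    congr 1
    refine List.map_congr_left fun a ha => ?_
    have : a < ws.length := by simpa using hp.subset (List.mem_reverse.1 ha)
    simp [List.getD, this]
  have hWp : W.Perm (List.range' j m) := by
    rw [← hj, hW]
    refine List.Perm.flatten ?_
    refine (((List.reverse_perm _).trans hp).map _).trans ?_
    rw [show (List.range ws.length).map (fun i => ws.getD i []) = ws from
      List.ext_getElem (by simp) fun a h1 h2 => by simp [List.getD, h2]]
    exact (List.reverse_perm _).symm
  have hWj := hx.window hm hWp hWe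
  cases ws with
  | nil => simp at hil
  | cons w ws =>
    obtain ⟨i, rfl⟩ := Nat.exists_eq_succ_of_ne_zero hi
    have hi' : i < ws.length := by simpa using hil
    have h0 : w ≠ [] := fun h => hw (by simp [h])
    have h1 : ws[i] ≠ [] := fun h => hw (by simp [← h])
    have e1 : (ws.reverse.flatten ++ w).getLast? = ws[i].getLast? := by
      have : ws.reverse.flatten ++ w = (r.reverse.map fun i => (w :: ws).getD i []).flatten ++ ws[i] := by
        have := hj.trans hWj.symm
        simpa [hW, hi', List.getD] using this
      rw [this, List.getLast?_append]
      simp [List.getLast?_eq_some_getLast h1]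
    rw [List.getLast?_append, List.getLast?_eq_some_getLast h0, List.getLast?_eq_some_getLast h1] at e1
    have e2 : w.getLast h0 = ws[i].getLast h1 := by simpa using e1
    have h3 : w.getLast h0 ∈ ws.reverse.flatten := by
      rw [e2]
      exact List.mem_flatten.2 ⟨ws[i], by simp, List.getLast_mem _⟩
    have h4 : (ws.reverse.flatten ++ w).Nodup := by
      rw [show ws.reverse.flatten ++ w = (w :: ws).reverse.flatten by simp, hj]
      exact List.nodup_range'
    exact (List.nodup_append.1 h4).2.2 _ h3 _ (List.getLast_mem h0) rfl

theorem test_sound (hx : Rigid x) {v : ℕ} {ns : List ℕ} {k : ℕ} {L : List C6} {f : List M5 → β}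
    (hk : k ≤ 8) (hv : v.testBit n = true) (hL : RepCols x n k L)
    (h : ∀ Bs, (permTest Bs).testBit n = false → Q (f Bs)) : Q (mkBlocks v ns L f) :=
  mkBlocks_ind hv hL fun Bs _ hB hw ⟨_, _, e, hj⟩ =>
    h Bs (hx.permTest_eq_false hB hw (e.trans_le hk) hj)

theorem Letter.sel_eq {code : Nat} {sel : ∀ α : Type, α → α → α → α → α → R5 α}
    (h : Letter.mk code sel ∈ letters) (α : Type) (a b c d e : α) :
    sel α a b c d e = (Letter.mk code sel).fn.map (R5.mk a b c d e).get := by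
  have key : ∀ l ∈ letters, l.rec fun _ sel =>
      sel α a b c d e = (sel (Fin 5) 0 1 2 3 4).map (R5.mk a b c d e).get := by
    simp only [letters, List.forall_mem_cons]
    repeat' constructor
    simp
  exact key _ h

/-- In lane `n`, the relation `y P = Q y` fails. -/
def Rel.Fails (n : ℕ) (y : A5) (r : Rel) : Prop :=
  r.rec fun P Q => ∃ p q : A5, RepVec n P p ∧ RepMat n Q q ∧ y * p ≠ q * y

theorem relBit_eq_false {code : Nat} {sel : ∀ α : Type, α → α → α → α → α → R5 α} {y : A5}
    (hl : Letter.mk code sel ∈ letters) (hy : (Letter.mk code sel).Rep y) {r : Rel}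
    (hr : r.Fails n y) : (relBit sel r).testBit n = false := by
  by_contra hf
  obtain ⟨⟨p0, p1, p2⟩, ⟨a, b, c, d, e⟩⟩ := r
  obtain ⟨p, q, hp, hq, hne⟩ := hr
  have hrow {i : Fin 5} {u w : R5 Nat} (hu : RepRow n u (p.1 i)) (hw : RepRow n w (q.1 (y.1 i)))
      (h : (selRowEq sel u w).testBit n = true) : p.1 i = (y⁻¹ * q * y).1 i := by
    obtain ⟨w0, w1, w2, w3, w4⟩ := w
    refine eq_of_rowEq (w := sel Nat w0 w1 w2 w3 w4) hu (fun j hj => ?_) h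
    rw [Letter.sel_eq hl, R5.get_map, hy j] at hj
    have := hw _ hj
    simp [this]
  have hget (i : Fin 5) : (sel (R5 Nat) a b c d e).get i = (R5.mk a b c d e).get (y.1 i) := by
    rw [Letter.sel_eq hl, R5.get_map, hy i]
  rcases hs : sel (R5 Nat) a b c d e with ⟨q0, q1, q2, q3, q4⟩
  rw [hs] at hget
  have hh : ((selRowEq sel p0 q0).testBit n = true ∧ (selRowEq sel p1 q1).testBit n = true) ∧
      (selRowEq sel p2 q2).testBit n = true := by
    simpa only [relBit, hs, testBit_land, Bool.and_eq_true, Bool.not_eq_false] using hf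
  have hq' (i : Fin 5) : RepRow n ((R5.mk q0 q1 q2 q3 q4).get i) (q.1 (y.1 i)) := by
    rw [hget]
    exact hq _
  have := eq_of_agree (hrow hp.1 (hq' 0) hh.1.1) (hrow hp.2.1 (hq' 1) hh.1.2)
    (hrow hp.2.2 (hq' 2) hh.2)
  exact hne (by rw [this]; group)

theorem relBits_eq_false {code : Nat} {sel : ∀ α : Type, α → α → α → α → α → R5 α} {y : A5}
    (hl : Letter.mk code sel ∈ letters) (hy : (Letter.mk code sel).Rep y) {rs : List Rel}
    (hr : ∀ r ∈ rs, r.Fails n y) : (relBits sel rs).testBit n = false := by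
  induction rs with
  | nil => simp [relBits]
  | cons r rs ih =>
    rw [List.forall_mem_cons] at hr
    simp [relBits, relBit_eq_false hl hy hr.1, ih hr.2]


/-- In lane `n`, the matrices `L` represent an initial part of `x (k - 1), …, x 0`. -/
def RepMats (x : ℕ → A5) (n : ℕ) : ℕ → List M5 → Prop
  | _, [] => True
  | 0, _ :: _ => False
  | k + 1, M :: L => RepMat n M (x k) ∧ RepMats x n k L

theorem decodeAll_ind {v w k : ℕ} {L : List C6} {f : List M5 → β} (hv : v.testBit n = true)
    (hL : RepCols x n k L)
    (h : ∀ Ms, RepMats x n k Ms → Ms.length = min w k → Q (f Ms)) : Q (decodeAll v w L f) := by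
  induction w generalizing k L f with
  | zero => exact h [] (by simp [RepMats]) (by simp)
  | succ w ih =>
    cases k with
    | zero =>
      obtain rfl : L = [] := hL
      exact h [] (by simp [RepMats]) (by simp)
    | succ k =>
      cases L with
      | nil => cases hL
      | cons C L =>
        exact decode_ind hv hL.1 fun M hM => ih hL.2 fun Ms hMs hl =>
          h (M :: Ms) ⟨hM, hMs⟩ (by simp [hl])

theorem Rigid.rel_ne (hx : Rigid x) {k j : ℕ} (hk : k < 8) (hj : j ≤ k) {a b d : List ℕ}
    (ha : a ≠ []) (h : a ++ b ++ d = List.range' j (k - j)) :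
    x k * (pr x b * pr x a) ≠ (pr x d)⁻¹ * pr x (a ++ b ++ d) * x k := by
  intro he
  have e1 : List.range' j (k + 1 - j) = a ++ b ++ d ++ [k] := by
    rw [h, Nat.sub_add_comm hj, List.range'_concat]
    simp [hj]
  have hp : (d ++ k :: (b ++ a)).Perm (List.range' j (k + 1 - j)) := by
    rw [e1, List.perm_iff_count]
    intro i
    simp only [List.count_append, List.count_cons, List.count_nil]
    omega
  have hw := hx.window (by omega) hp (by
    rw [e1]
    simp only [pr_append, show pr x (k :: (b ++ a)) = x k * (pr x b * pr x a) by simp [pr],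
      show pr x [k] = x k by simp [pr]] at he ⊢
    rw [he]
    simp [mul_assoc])
  rw [e1] at hw
  have hl := congrArg List.getLast? hw
  rw [show d ++ k :: (b ++ a) = (d ++ k :: b) ++ a by simp, List.getLast?_append,
    List.getLast?_eq_some_getLast ha] at hl
  have hm : a.getLast ha ∈ List.range' j (k - j) := by
    rw [← h]
    simp
  simp at hl
  rw [hl] at hm
  simp at hm
  omega

variable {y : A5} {k : ℕ} {f : List Rel → β}

theorem range'_pred {j k : ℕ} (h : j + 1 ≤ k) :
    List.range' j (k - j) = j :: List.range' (j + 1) (k - (j + 1)) := by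
  rw [show k - j = (k - (j + 1)) + 1 by omega, List.range'_succ]

theorem relsA_ind (hx : Rigid x) (hk : k < 8) {D B X : M5} {A : V3} {L : List M5}
    {acc : List Rel} {j : ℕ} (hj : j ≤ k) {a b d : List ℕ}
    (hw : a ++ b ++ d = List.range' j (k - j)) (hD : RepMat n D (pr x d)⁻¹)
    (hB : RepMat n B (pr x b)) (hA : RepVec n A (pr x a)) (hX : RepMat n X (pr x (a ++ b ++ d)))
    (hL : RepMats x n j L) (hacc : ∀ r ∈ acc, r.Fails n (x k))
    (h : ∀ rs, (∀ r ∈ rs, Rel.Fails n (x k) r) → Q (f rs)) : Q (relsA D B A X L acc f) := by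
  induction L generalizing A X acc j a with
  | nil => exact h acc hacc
  | cons M L ih =>
    cases j with
    | zero => cases hL
    | succ j =>
      have hw' : (j :: a) ++ b ++ d = List.range' j (k - j) := by
        rw [range'_pred hj, ← hw]
        simp
      refine vmul_ind hA hL.1 fun A hA => mmul_ind hX hL.1 fun X hX => vmul_ind hA hB fun P hP =>
        mmul_ind hX hD fun R hR => ?_
      rw [show x j * pr x a = pr x (j :: a) by simp [pr]] at hA hP
      rw [show x j * pr x (a ++ b ++ d) = pr x (j :: a ++ b ++ d) by simp [pr]] at hX hR
      refine ih (by omega) hw' hA hX hL.2 ?_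
      rw [List.forall_mem_cons]
      exact ⟨⟨_, _, hP, hR, hx.rel_ne hk (by omega) (by simp) hw'⟩, hacc⟩

theorem relsB_ind (hx : Rigid x) (hk : k < 8) {I D B X : M5} {L : List M5}
    {acc : List Rel} {j : ℕ} (hj : j ≤ k) {b d : List ℕ}
    (hw : b ++ d = List.range' j (k - j)) (hI : RepMat n I 1) (hD : RepMat n D (pr x d)⁻¹)
    (hB : RepMat n B (pr x b)) (hX : RepMat n X (pr x (b ++ d)))
    (hL : RepMats x n j L) (hacc : ∀ r ∈ acc, r.Fails n (x k))
    (h : ∀ rs, (∀ r ∈ rs, Rel.Fails n (x k) r) → Q (f rs)) : Q (relsB I D B X L acc f) := by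
  induction L generalizing B X acc j b with
  | nil => exact h acc hacc
  | cons M L ih =>
    cases j with
    | zero => cases hL
    | succ j =>
      refine top_ind hI fun A hA => relsA_ind (a := []) hx hk hj hw hD hB hA hX hL hacc
        fun acc hacc => mmul_ind hB hL.1 fun B hB => mmul_ind hX hL.1 fun X hX => ?_
      rw [show x j * pr x b = pr x (j :: b) by simp [pr]] at hB
      rw [show x j * pr x (b ++ d) = pr x (j :: b ++ d) by simp [pr]] at hX
      exact ih (by omega) (by rw [range'_pred hj, ← hw]; simp) hB hX hL.2 hacc

theorem relsD_ind (hx : Rigid x) (hk : k < 8) {I D : M5} {L : List M5}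
    {acc : List Rel} {j : ℕ} (hj : j ≤ k) (hI : RepMat n I 1)
    (hD : RepMat n D (pr x (List.range' j (k - j))))
    (hL : RepMats x n j L) (hacc : ∀ r ∈ acc, r.Fails n (x k))
    (h : ∀ rs, (∀ r ∈ rs, Rel.Fails n (x k) r) → Q (f rs)) : Q (relsD I D L acc f) := by
  induction L generalizing D acc j with
  | nil => exact h acc hacc
  | cons M L ih =>
    cases j with
    | zero => cases hL
    | succ j =>
      refine transpose_ind hD fun D' hD' => relsB_ind (b := []) hx hk hj rfl hI hD' hI hD hL hacc
        fun acc hacc => mmul_ind hD hL.1 fun D hD => ?_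
      rw [show x j * pr x (List.range' (j + 1) (k - (j + 1))) = pr x (List.range' j (k - j)) by
        simp [range'_pred hj, pr]] at hD
      exact ih (by omega) hD hL.2 hacc

theorem testBit_shiftLeft (a i j : ℕ) :
    (Nat.shiftLeft a i).testBit j = (decide (i ≤ j) && a.testBit (j - i)) :=
  Nat.testBit_shiftLeft a

theorem testBit_shiftRight (a i j : ℕ) : (Nat.shiftRight a i).testBit j = a.testBit (i + j) :=
  Nat.testBit_shiftRight a

theorem beq_rec_ind {a c : ℕ} {X Y : β} (h : a ≠ c → Q X) (h' : a = c → Q Y) :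
    Q ((Nat.beq a c).rec X Y) := by
  cases e : Nat.beq a c with
  | false => exact h (Nat.ne_of_beq_eq_false e)
  | true => exact h' (Nat.eq_of_beq_eq_true e)

theorem force_ind {a : ℕ} {k : ℕ → β} (h : Q (k a)) : Q (force a k) := h

theorem row_ind {a₀ a₁ a₂ a₃ a₄ : ℕ} {i : Fin 5} {k : R5 Nat → β}
    (h0 : a₀.testBit n = true → i = 0) (h1 : a₁.testBit n = true → i = 1)
    (h2 : a₂.testBit n = true → i = 2) (h3 : a₃.testBit n = true → i = 3)
    (h4 : a₄.testBit n = true → i = 4) (h : ∀ R, RepRow n R i → Q (k R)) :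
    Q (row a₀ a₁ a₂ a₃ a₄ k) :=
  h _ (repRow_mk.2 ⟨h0, h1, h2, h3, h4⟩)

theorem bitLen_ind {v m a : ℕ} {k : ℕ → β} (h : ∀ N, Q (k N)) : Q (bitLen v m a k) := by
  induction m generalizing a with
  | zero => exact h _
  | succ m ih => exact beq_rec_ind (fun _ => ih) fun _ => ih

theorem prefixXor_ind {full m j a : ℕ} {k : ℕ → β} (h : ∀ N, Q (k N)) :
    Q (prefixXor full m j a k) := by
  induction m generalizing j a with
  | zero => exact h _
  | succ m ih => exact ih

theorem mapCols_eq {f : ℕ → (ℕ → β) → β} {g : ℕ → ℕ} (hf : ∀ a k, f a k = k (g a))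
    (L : List C6) (k : List C6 → β) : mapCols f L k = k (L.map (C6.map g)) := by
  induction L generalizing k with
  | nil => rfl
  | cons C L ih => simp [mapCols, mapC6, hf, ih, C6.map]


theorem RepCols.map {g : ℕ → ℕ} {n' : ℕ} (hg : ∀ a, (g a).testBit n' = a.testBit n) {k : ℕ}
    {L : List C6} (h : RepCols x n k L) : RepCols x n' k (L.map (C6.map g)) := by
  induction k generalizing L with
  | zero =>
    obtain rfl : L = [] := h
    rfl
  | succ k ih =>
    cases L with
    | nil => cases h
    | cons C L =>
      obtain ⟨⟨l, hl, hx, hb⟩, h⟩ := h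
      exact ⟨⟨l, hl, hx, fun i => by rw [C6.get_map, hg, hb]⟩, ih h⟩

theorem push_ind {N a c bit : ℕ} {k : ℕ → β} (ha : a < 2 ^ N)
    (h : ∀ r : ℕ, (∀ i, r.testBit (N + i) = c.testBit i) →
      (∀ i < N, a.testBit i = true → r.testBit i = bit.testBit 0) → Q (k r)) :
    Q (push N a c bit k) := by
  have e : Nat.mul a (Nat.land bit 1) = if bit.testBit 0 then a else 0 := by
    rw [Nat.mul_eq, show Nat.land bit 1 = bit % 2 from Nat.and_one_is_mod bit, Nat.testBit_zero]
    rcases Nat.mod_two_eq_zero_or_one bit with h | h <;> simp [h]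
  refine h _ (fun i => ?_) (fun i hi hb => ?_)
  · have : a.testBit (N + i) = false :=
      Nat.testBit_lt_two_pow (ha.trans_le (Nat.pow_le_pow_right (by simp) (by simp)))
    rw [testBit_lor, testBit_shiftLeft, e]
    cases bit.testBit 0 <;> simp [this]
  · rw [testBit_lor, testBit_shiftLeft, e]
    cases bit.testBit 0 <;> simp [hb, hi.not_ge]

theorem pushCode_ind {N a code : ℕ} {C : C6} {k : C6 → β} (ha : a < 2 ^ N)
    (h : ∀ D : C6, (∀ j i, (D.get j).testBit (N + i) = (C.get j).testBit i) →
      (∀ j, ∀ i < N, a.testBit i = true → (D.get j).testBit i = code.testBit j) → Q (k D)) :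
    Q (pushCode N a code C k) := by
  obtain ⟨b0, b1, b2, b3, b4, b5⟩ := C
  have hs (j : ℕ) : (Nat.shiftRight code j).testBit 0 = code.testBit j := testBit_shiftRight ..
  refine push_ind ha fun c0 h0 g0 => push_ind ha fun c1 h1 g1 => push_ind ha fun c2 h2 g2 =>
    push_ind ha fun c3 h3 g3 => push_ind ha fun c4 h4 g4 => push_ind ha fun c5 h5 g5 => ?_
  rw [hs] at g1 g2 g3 g4 g5
  refine h _ ?_ ?_
  · rw [Fin.forall_fin_succ, Fin.forall_fin_succ, Fin.forall_fin_succ, Fin.forall_fin_succ,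
      Fin.forall_fin_succ, Fin.forall_fin_one]
    exact ⟨h0, h1, h2, h3, h4, h5⟩
  · rw [Fin.forall_fin_succ, Fin.forall_fin_succ, Fin.forall_fin_succ, Fin.forall_fin_succ,
      Fin.forall_fin_succ, Fin.forall_fin_one]
    exact ⟨g0, g1, g2, g3, g4, g5⟩

theorem xor_land_lt {v N : ℕ} (c : ℕ) (hv : v < 2 ^ N) : Nat.xor v (Nat.land v c) < 2 ^ N :=
  Nat.xor_lt_two_pow hv (Nat.and_le_left.trans_lt hv)

theorem newLanes_skip {v N i : ℕ} {rels : List Rel} {ls : List Letter} {w : ℕ} {C : C6}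
    {f : ℕ → C6 → β} (hv : v < 2 ^ N)
    (h : ∀ w' C', w'.testBit (N * ls.length + i) = w.testBit i →
      (∀ j, (C'.get j).testBit (N * ls.length + i) = (C.get j).testBit i) → Q (f w' C')) :
    Q (newLanes v N rels ls w C f) := by
  induction ls generalizing i w C with
  | nil => exact h w C (by simp) (by simp)
  | cons l ls ih =>
    obtain ⟨code, sel⟩ := l
    have e : N * (Letter.mk code sel :: ls).length + i = N * ls.length + (N + i) := by
      rw [List.length_cons]
      ring
    rw [e] at h
    exact push_ind (xor_land_lt _ hv) fun w' hw _ => pushCode_ind (xor_land_lt _ hv)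
      fun C' hC _ => ih (i := N + i) fun w'' C'' h1 h2 =>
        h w'' C'' (h1.trans (hw i)) fun j => (h2 j).trans (hC j i)

theorem newLanes_ind {v N : ℕ} {rels : List Rel} {ls : List Letter} {w : ℕ} {C : C6}
    {f : ℕ → C6 → β} {y : A5} (hv : v < 2 ^ N) (hn : v.testBit n = true)
    (hrel : ∀ r ∈ rels, r.Fails n y) {l : Letter} (hl : l ∈ ls) (hl' : l ∈ letters)
    (hy : l.Rep y)
    (h : ∀ m < ls.length, ∀ w C, w.testBit (N * m + n) = true → RepCol (N * m + n) C y →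
      Q (f w C)) : Q (newLanes v N rels ls w C f) := by
  induction ls generalizing w C with
  | nil => simp at hl
  | cons l' ls ih =>
    have hnN : n < N := by
      by_contra hc
      rw [Nat.testBit_lt_two_pow (hv.trans_le (Nat.pow_le_pow_right (by simp) (not_lt.1 hc)))] at hn
      cases hn
    obtain ⟨code, sel⟩ := l'
    rcases List.mem_cons.1 hl with rfl | hl
    · have hb : (Nat.xor v (Nat.land v (relBits sel rels))).testBit n = true := by
        rw [testBit_xor, testBit_land, hn, relBits_eq_false hl' hy hrel]
        rfl
      change Q (push N (Nat.xor v (Nat.land v (relBits sel rels))) w 1 fun w =>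
        pushCode N (Nat.xor v (Nat.land v (relBits sel rels))) code C fun C =>
          newLanes v N rels ls w C f)
      refine push_ind (xor_land_lt _ hv) fun w' _ hw => pushCode_ind (xor_land_lt _ hv)
        fun C' _ hC => newLanes_skip (i := n) hv fun w'' C'' h1 h2 => h ls.length (by simp) _ _ ?_ ?_
      · rw [h1, hw n hnN hb]
        rfl
      · exact ⟨_, hl', hy, fun j => (h2 j).trans (hC j n hnN hb)⟩
    · change Q (push N (Nat.xor v (Nat.land v (relBits sel rels))) w 1 fun w =>
        pushCode N (Nat.xor v (Nat.land v (relBits sel rels))) code C fun C =>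
          newLanes v N rels ls w C f)
      exact ih hl fun m hm => h m (hm.trans (by simp))

theorem double_eq (m N a : ℕ) (k : ℕ → β) : double m N a k = k (double m N a id) := by
  induction m generalizing N a with
  | zero => rfl
  | succ m ih => exact ih ..

theorem testBit_double {m N a q i : ℕ} (ha : a < 2 ^ N) (hq : q < 2 ^ m) (hi : i < N) :
    (double m N a id).testBit (N * q + i) = a.testBit i := by
  induction m generalizing N a q i with
  | zero =>
    obtain rfl : q = 0 := by simpa using hq
    simp [double]
  | succ m ih =>
    have hN : ∀ j, N ≤ j → a.testBit j = false := fun j hj =>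
      Nat.testBit_lt_two_pow (ha.trans_le (Nat.pow_le_pow_right (by simp) hj))
    have e : N * q + i = (N + N) * (q / 2) + (N * (q % 2) + i) := by
      conv_lhs => rw [← Nat.div_add_mod q 2]
      ring
    have hlt : Nat.lor a (Nat.shiftLeft a N) < 2 ^ (N + N) := by
      refine Nat.or_lt_two_pow (ha.trans_le (Nat.pow_le_pow_right (by simp) (by simp))) ?_
      rw [Nat.shiftLeft_eq', Nat.shiftLeft_eq, pow_add]
      exact Nat.mul_lt_mul_of_pos_right ha (by positivity)
    have hq2 : N * (q % 2) + i < N + N := by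
      rcases Nat.mod_two_eq_zero_or_one q with h | h <;> simp [h] <;> omega
    rw [e]
    refine (ih hlt (by omega) hq2).trans ?_
    rw [testBit_lor, testBit_shiftLeft]
    rcases Nat.mod_two_eq_zero_or_one q with h | h
    · simp [h, hi.not_ge]
    · simp [h, hN]

theorem extend_ind (hx : Rigid x) {k : ℕ} (hk : k < 8) {ls : List Letter} {N w v : ℕ}
    {cols : List C6} {f : ℕ → List C6 → β} (hv : v < 2 ^ N) (hn : v.testBit n = true)
    (hcols : RepCols x n k cols) (hls : ls.length ≤ 64)
    (hl : ∃ l ∈ ls, l ∈ letters ∧ l.Rep (x k))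
    (h : ∀ n' v' cols', v'.testBit n' = true → RepCols x n' (k + 1) cols' → Q (f v' cols')) :
    Q (extend ls N w v cols f) := by
  obtain ⟨l, hl, hl', hy⟩ := hl
  have h0 {p : Prop} : (0 : ℕ).testBit n = true → p := by simp
  refine row_ind (i := 0) (fun _ => rfl) h0 h0 h0 h0 fun i0 h0' =>
    row_ind (i := 1) h0 (fun _ => rfl) h0 h0 h0 fun i1 h1' =>
    row_ind (i := 2) h0 h0 (fun _ => rfl) h0 h0 fun i2 h2' =>
    row_ind (i := 3) h0 h0 h0 (fun _ => rfl) h0 fun i3 h3' =>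
    row_ind (i := 4) h0 h0 h0 h0 (fun _ => rfl) fun i4 h4' =>
    decodeAll_ind hn hcols fun Ms hMs _ => ?_
  have hI : RepMat n (.mk i0 i1 i2 i3 i4) 1 := repMat_mk.2 ⟨h0', h1', h2', h3', h4'⟩
  refine relsD_ind hx hk le_rfl hI (by simpa [pr] using hI) hMs (by simp) fun rels hrels =>
    newLanes_ind hv hn hrels hl hl' hy fun m hm w C hw hC => ?_
  rw [mapCols_eq (f := fun c k => force (Nat.land c v) fun c => double 6 N c k)
    (g := fun c => double 6 N (Nat.land c v) id) fun a k => double_eq 6 N _ k]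
  refine h (N * m + n) _ _ hw ⟨hC, hcols.map fun a => ?_⟩
  have hnN : n < N := by
    by_contra hc
    rw [Nat.testBit_lt_two_pow (hv.trans_le (Nat.pow_le_pow_right (by simp) (not_lt.1 hc)))] at hn
    cases hn
  have hlt : Nat.land a v < 2 ^ N := Nat.and_le_right.trans_lt hv
  rw [testBit_double hlt (by omega) hnN, testBit_land, hn, Bool.and_true]

theorem compressStages_ind {full s : ℕ} {k : ℕ} {i j v m : ℕ} {cols : List C6}
    {f : ℕ → List C6 → β} (hn : v.testBit n = true) (hcols : RepCols x n k cols)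
    (h : ∀ n' v' cols', v'.testBit n' = true → RepCols x n' k cols' → Q (f v' cols')) :
    Q (compressStages full s i j v m cols f) := by
  induction i generalizing n j v m cols with
  | zero => exact h n v cols hn hcols
  | succ i ih =>
    refine prefixXor_ind fun p => beq_rec_ind (fun _ => h n v cols hn hcols) fun h1 =>
      beq_rec_ind (fun _ => h n v cols hn hcols) fun h2 => ?_
    simp only [force_eq] at h1 h2 ⊢
    set mv := Nat.land p v with hmv
    rw [mapCols_eq (g := fun c => Nat.lor (Nat.land c (Nat.xor v mv))
      (Nat.shiftRight (Nat.land c mv) j)) fun a k => rfl]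
    have h1' (q : ℕ) := congrArg (·.testBit q) h1
    have h2' (q : ℕ) := congrArg (·.testBit q) h2
    simp only [testBit_land, testBit_xor, testBit_shiftRight, testBit_shiftLeft,
      Nat.zero_testBit] at h1' h2'
    cases hm : mv.testBit n with
    | false =>
      have : mv.testBit (j + n) = false := by
        have := h1' n
        rw [hn, hm] at this
        simpa using this
      refine ih (n := n) ?_ (hcols.map fun a => ?_) <;>
        simp only [testBit_lor, testBit_land, testBit_xor, testBit_shiftRight, hn, hm, this] <;> simp
    | true =>
      have hj : j ≤ n := by
        have := h2' n
        rw [hm] at this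
        simp at this
        exact this.1
      have e : j + (n - j) = n := by omega
      have := h1' (n - j)
      rw [e, hm, Bool.and_true] at this
      refine ih (n := n - j) ?_ (hcols.map fun a => ?_) <;>
        simp only [testBit_lor, testBit_land, testBit_xor, testBit_shiftRight, e, hm, this] <;> simp

theorem compress_ind {k v : ℕ} {cols : List C6}
    {f : ℕ → List C6 → β} (hn : v.testBit n = true) (hcols : RepCols x n k cols)
    (h : ∀ n' v' cols', v'.testBit n' = true → RepCols x n' k cols' → Q (f v' cols')) :
    Q (compress v cols f) := by
  rw [compress]
  exact bitLen_ind fun _ => force_ind <| bitLen_ind fun _ => force_ind <|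
    compressStages_ind hn hcols h

/-- Starting with `k` letters, a script has at most eight letters throughout, and its word tests
apply to nontrivial rearrangements of eight letters. -/
def ValidScript : ℕ → List Instr → Prop
  | _, [] => True
  | k, i :: is => i.rec (fun _ => k < 8 ∧ ValidScript (k + 1) is)
      (fun _ => k ≤ 8 ∧ ValidScript k is)
      (fun l => (k = 8 ∧ l.length = 8 ∧ (l.reverse.map (7 - ·)).Perm (List.range 8) ∧
        l.reverse.map (7 - ·) ≠ List.range 8) ∧ ValidScript k is)
      (ValidScript k is)

theorem RepMats.forall₂ {k : ℕ} {Ms : List M5} (h : RepMats x n k Ms) (hl : Ms.length = k) :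
    List.Forall₂ (RepMat n) Ms ((List.range k).reverse.map x) := by
  induction k generalizing Ms with
  | zero =>
    obtain rfl : Ms = [] := List.length_eq_zero_iff.1 hl
    simp
  | succ k ih =>
    cases Ms with
    | nil => simp at hl
    | cons M Ms =>
      rw [List.range_succ, List.reverse_append]
      exact .cons h.1 (ih h.2 (by simpa using hl))

theorem act_of_wordTest {Bs : List M5} {T acc : V3} {l : List ℕ} {a g : A5} {b : ℕ → A5}
    (hB : ∀ i M, Bs[i]? = some M → RepMat n M (b i)) (hT : RepVec n T g) (ha : RepVec n acc a)
    (h : (wordTest Bs T l acc).testBit n = true) : act b l a = g := by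
  induction l generalizing acc a with
  | nil => exact eq_of_vecEq ha hT h
  | cons i l ih =>
    obtain ⟨M, hi, h⟩ := exists_of_withNth h
    revert h
    refine vmul_ind (Q := fun r : ℕ => r.testBit n = true → act b (i :: l) a = g) ha (hB i M hi)
      fun W hW h => ?_
    exact ih hW h

theorem Rigid.wordTest_eq_false (hx : Rigid x) {Bs : List M5} {T V : V3} {l : List ℕ}
    (hB : RepMats x n 8 Bs) (hlen : Bs.length = 8) (hV : RepVec n V 1)
    (hT : RepVec n T (pr x (List.range 8))) (hp : (l.reverse.map (7 - ·)).Perm (List.range 8))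
    (hl : l.reverse.map (7 - ·) ≠ List.range 8) : (wordTest Bs T l V).testBit n = false := by
  by_contra hf
  have h2 := hB.forall₂ hlen
  have h := act_of_wordTest (b := fun i => x (7 - i)) (fun i M hi => ?_) hT hV (by simpa using hf)
  · refine hl (hx _ hp ?_)
    rw [← h, act_eq, mul_one, pr, List.map_map]
    rfl
  · rw [List.forall₂_iff_get] at h2
    rw [List.getElem?_eq_some_iff] at hi
    obtain ⟨h3, rfl⟩ := hi
    have := h2.2 i h3 (by simpa [hlen] using h3)
    simpa using this

theorem run_eq_false (hx : Rigid x) {ls : List Letter} (hls : ls.length ≤ 64)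
    (hl : ∀ i, ∃ l ∈ ls, l ∈ letters ∧ l.Rep (x i)) {is : List Instr} {k v : ℕ} {cols : List C6}
    (hs : ValidScript k is) (hv : v.testBit n = true) (hcols : RepCols x n k cols) :
    run ls is v cols = false := by
  have hv0 {v n : ℕ} (hv : v.testBit n = true) : v ≠ 0 := by
    rintro rfl
    simp at hv
  induction is generalizing n k v cols with
  | nil =>
    rw [run]
    exact Bool.eq_false_iff.2 fun h => hv0 hv (Nat.eq_of_beq_eq_true h)
  | cons i is ih =>
    rw [run]
    refine beq_rec_ind (Q := (· = false)) (fun _ => ?_) fun h => absurd h (hv0 hv)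
    cases i with
    | ext w =>
      dsimp only
      refine bitLen_ind (Q := (· = false)) fun N => beq_rec_ind (Q := (· = false)) (fun _ => rfl)
        fun h => ?_
      have hvN : v < 2 ^ N := by
        have : v >>> N = 0 := h
        rw [Nat.shiftRight_eq_div_pow, Nat.div_eq_zero_iff] at this
        exact this.resolve_left (by positivity)
      exact extend_ind (Q := (· = false)) hx hs.1 hvN hv hcols hls (hl k) fun n' v' cols' hv hcols =>
        ih hs.2 hv hcols
    | test ns =>
      refine test_sound (Q := (· = false)) hx hs.1 hv hcols fun Bs hB =>
        force_ind (Q := (· = false)) (ih hs.2 ?_ hcols)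
      simp [hB, hv]
    | perm l =>
      obtain ⟨⟨rfl, h8, hp, hne⟩, hs⟩ := hs
      dsimp only
      have h0 {p : Prop} : (0 : ℕ).testBit n = true → p := by simp
      refine decodeAll_ind (Q := (· = false)) hv hcols fun Bs hB hlen =>
        row_ind (Q := (· = false)) (i := 0) (fun _ => rfl) h0 h0 h0 h0 fun i0 h0' =>
        row_ind (Q := (· = false)) (i := 1) h0 (fun _ => rfl) h0 h0 h0 fun i1 h1' =>
        row_ind (Q := (· = false)) (i := 2) h0 h0 (fun _ => rfl) h0 h0 fun i2 h2' => ?_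
      rw [h8, min_self] at hlen
      have hV : RepVec n (.mk i0 i1 i2) 1 := ⟨h0', h1', h2'⟩
      refine vprod_ind (Q := (· = false)) hV (hB.forall₂ hlen) fun T hT =>
        force_ind (Q := (· = false)) (ih hs ?_ hcols)
      rw [foldl_mul_left, mul_one, ← List.map_reverse, List.reverse_reverse] at hT
      simp [hx.wordTest_eq_false hB hlen hV hT hp hne, hv]
    | comp =>
      exact compress_ind (Q := (· = false)) hv hcols fun n' v' cols' hv hcols => ih hs hv hcols

theorem validScript_script : ValidScript 2 script := by
  simp only [script, ValidScript]
  decide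

theorem testBit_foldr (l : List ℕ) (j : ℕ) (h : n < l.length) :
    (l.foldr (fun c a => 2 * a + (c >>> j) % 2) 0).testBit n = (l[n]).testBit j := by
  induction l generalizing n with
  | nil => simp at h
  | cons a l ih =>
    have h2 : (a >>> j) % 2 < 2 := Nat.mod_lt _ (by simp)
    cases n with
    | zero =>
      rw [List.foldr_cons, Nat.testBit_zero, List.getElem_cons_zero, Nat.testBit_eq_decide_div_mod_eq,
        Nat.shiftRight_eq_div_pow]
      congr 2
      omega
    | succ n =>
      rw [List.foldr_cons, Nat.testBit_succ, List.getElem_cons_succ, ← ih]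
      congr 1
      omega

theorem repCol_initCol {l : List ℕ} {i : Letter} {g : A5} (h : n < l.length) (hi : i ∈ letters)
    (hc : i.code = l[n]) (hg : i.Rep g) : RepCol n (initCol l) g := by
  refine ⟨i, hi, hg, fun j => ?_⟩
  rw [hc]
  fin_cases j <;> exact testBit_foldr l _ h

/-- A rigid sequence extended to a sequence of period nine with trivial product over a period. -/
structure Closed (x : ℕ → A5) : Prop where
  rigid : Rigid x
  prod_eq_one : pr x (List.range 9) = 1
  periodic : ∀ i, x (i + 9) = x i

theorem pr_comp_add (x : ℕ → A5) (w : List ℕ) :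
    pr (fun i => x (i + 1)) w = pr x (w.map (· + 1)) := by
  rw [pr, pr, List.map_map]
  rfl

theorem Closed.shift_one (hx : Closed x) : Closed fun i => x (i + 1) := by
  have h8 : pr x (List.range 8) * x 8 = 1 := by
    rw [← hx.prod_eq_one, show List.range 9 = List.range 8 ++ [8] from rfl, pr_append]
    congr 1
  have h0 : x 0 * pr x (List.range' 1 8) = 1 := by
    rw [← hx.prod_eq_one, show List.range 9 = 0 :: List.range' 1 8 from rfl]
    simp [pr]
  have e8 : (List.range 8).map (· + 1) = List.range' 1 8 := rfl
  refine ⟨fun w hw h => ?_, ?_, fun i => ?_⟩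
  · rw [pr_comp_add, pr_comp_add, e8] at h
    have hp : (w.map (· + 1)).Perm (List.range' 1 8) := e8 ▸ hw.map _
    obtain ⟨u, t, hut⟩ := List.append_of_mem (hp.mem_iff.2 (by decide : 8 ∈ List.range' 1 8))
    rw [hut] at h hp
    have hp' : (t ++ 0 :: u).Perm (List.range 8) := by
      have : List.range' 1 8 = List.range' 1 7 ++ [8] := rfl
      rw [this, List.perm_iff_count] at hp
      rw [show List.range 8 = 0 :: List.range' 1 7 from rfl, List.perm_iff_count]
      intro i
      have := hp i
      simp only [List.count_append, List.count_cons, List.count_nil] at this ⊢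
      omega
    have h1 : t ++ 0 :: u = List.range 8 := by
      refine hx.rigid _ hp' ?_
      rw [eq_inv_of_mul_eq_one_left h8, eq_inv_iff_mul_eq_one]
      have e := h0
      rw [← h, pr_append, show pr x (8 :: t) = x 8 * pr x t by simp [pr]] at e
      rw [pr_append, show pr x (0 :: u) = x 0 * pr x u by simp [pr]]
      have e2 : x 8 * pr x t * (x 0 * pr x u) = 1 := by
        rw [mul_eq_one_iff_eq_inv] at e ⊢
        rw [e]
        group
      rw [mul_assoc] at e2
      rw [← mul_eq_one_comm]
      exact e2
    cases t with
    | nil =>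
      have hu : u = List.range' 1 7 := (List.cons.inj h1).2
      rw [hu] at hut
      exact List.map_injective_iff.2 (add_left_injective 1) hut
    | cons a t =>
      obtain rfl : a = 0 := (List.cons.inj h1).1
      have := h1 ▸ List.nodup_range (n := 8)
      simp at this
  · rw [pr_comp_add, show (List.range 9).map (· + 1) = List.range' 1 8 ++ [9] from rfl, pr_append,
      show pr x [9] = x 0 by simpa [pr] using hx.periodic 0]
    exact mul_eq_one_comm.1 h0
  · rw [add_right_comm]
    exact hx.periodic _

theorem Closed.shift (hx : Closed x) (m : ℕ) : Closed fun i => x (i + m) := by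
  induction m with
  | zero => exact hx
  | succ m ih =>
    simp only [← add_assoc]
    simpa only [add_right_comm] using ih.shift_one

theorem pr_map (φ : A5 ≃* A5) (w : List ℕ) : pr (fun i => φ (x i)) w = φ (pr x w) := by
  rw [pr, pr, map_list_prod, List.map_map]
  rfl

theorem Rigid.map (hx : Rigid x) (φ : A5 ≃* A5) : Rigid fun i => φ (x i) := fun w hw h =>
  hx w hw (by simpa only [pr_map, φ.injective.eq_iff] using h)

theorem Rigid.not_commute (hx : Rigid x) : x 0 * x 1 ≠ x 1 * x 0 := by
  intro h
  have := hx (1 :: 0 :: List.range' 2 6) (by decide) (by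
    rw [show List.range 8 = 0 :: 1 :: List.range' 2 6 from rfl]
    simp only [pr, List.map_cons, List.prod_cons]
    rw [← mul_assoc, ← mul_assoc, h])
  simp [List.range_succ] at this

theorem exists_letter : ∀ g : Equiv.Perm (Fin 5), g ∈ alternatingGroup (Fin 5) →
    ∃ l ∈ letters, ∀ r, l.fn.get r = g r := by
  simp only [Equiv.Perm.mem_alternatingGroup]
  decide +kernel

def lettersOf (p : ℕ → Bool) : List Letter := letters.filter fun l => l.rec fun c _ => p c

/-- The codes of the elements whose square is trivial. -/
def codes2 : List ℕ := [0, 3, 8, 11, 12, 13, 14, 27, 30, 33, 41, 43, 47, 53, 55, 59]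

/-- The codes of the elements of order three. -/
def codes3 : List ℕ := [1, 2, 4, 5, 6, 7, 9, 10, 15, 19, 22, 24, 28, 29, 37, 39, 40, 49, 51, 52]

/-- The elements whose square is nontrivial. -/
def letters3 : List Letter := lettersOf fun c => !codes2.elem c

/-- The elements of order five. -/
def letters5 : List Letter := lettersOf fun c => !(codes2 ++ codes3).elem c

theorem mem_lettersOf {p : ℕ → Bool} {l : Letter} :
    l ∈ lettersOf p ↔ l ∈ letters ∧ p l.code = true :=
  List.mem_filter

theorem codes2_spec : ∀ l ∈ letters, l.code ∈ codes2 → ∀ r, l.fn.get (l.fn.get r) = r := by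
  decide +kernel

theorem codes3_spec : ∀ l ∈ letters, l.code ∈ codes3 →
    ∀ r, l.fn.get (l.fn.get (l.fn.get r)) = r := by
  decide +kernel

theorem Letter.Rep.sq_eq_one {l : Letter} {g : A5} (h : l.Rep g)
    (hl : ∀ r, l.fn.get (l.fn.get r) = r) : g ^ 2 = 1 := by
  refine Subtype.ext (Equiv.ext fun r => ?_)
  have := hl r
  rw [h, h] at this
  simpa [sq] using this

theorem Letter.Rep.cube_eq_one {l : Letter} {g : A5} (h : l.Rep g)
    (hl : ∀ r, l.fn.get (l.fn.get (l.fn.get r)) = r) : g ^ 3 = 1 := by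
  refine Subtype.ext (Equiv.ext fun r => ?_)
  have := hl r
  rw [h, h, h] at this
  simpa [pow_succ] using this

theorem exists_letter3 {g : A5} (hg : g ^ 2 ≠ 1) : ∃ l ∈ letters3, l ∈ letters ∧ l.Rep g := by
  obtain ⟨l, hl, h⟩ := exists_letter g.1 g.2
  refine ⟨l, mem_lettersOf.2 ⟨hl, ?_⟩, hl, h⟩
  by_contra hc
  exact hg (Letter.Rep.sq_eq_one h (codes2_spec l hl (by simpa using hc)))

theorem exists_letter5 {g : A5} (hg : g ^ 2 ≠ 1) (hg' : g ^ 3 ≠ 1) :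
    ∃ l ∈ letters5, l ∈ letters ∧ l.Rep g := by
  obtain ⟨l, hl, h⟩ := exists_letter g.1 g.2
  refine ⟨l, mem_lettersOf.2 ⟨hl, ?_⟩, hl, h⟩
  by_contra hc
  have : l.code ∈ codes2 ++ codes3 := by simpa [or_iff_not_imp_left] using hc
  rcases List.mem_append.1 this with h2 | h3
  · exact hg (Letter.Rep.sq_eq_one h (codes2_spec l hl h2))
  · exact hg' (Letter.Rep.cube_eq_one h (codes3_spec l hl h3))

/-- In some pair of `τ`-conjugates, the first element is `p` and the second has a code in `T`. -/
def HasConj (p : Equiv.Perm (Fin 5)) (T : List ℕ) (g h : A5) : Prop :=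
  ∃ τ : Equiv.Perm (Fin 5), τ * g.1 * τ⁻¹ = p ∧
    ∃ l ∈ letters, l.code ∈ T ∧ ∀ r, l.fn.get r = (τ * h.1 * τ⁻¹) r

theorem HasConj.of_conj {p : Equiv.Perm (Fin 5)} {P : Equiv.Perm (Fin 5) → Prop} {T : List ℕ}
    (hP : ∀ τ h, P h → P (τ * h * τ⁻¹))
    (hT : ∀ h : Equiv.Perm (Fin 5), h ∈ alternatingGroup (Fin 5) → P h → p * h ≠ h * p →
      ∃ τ : Equiv.Perm (Fin 5), τ * p = p * τ ∧
        ∃ l ∈ letters, l.code ∈ T ∧ ∀ r, l.fn.get r = (τ * h * τ⁻¹) r)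
    {g h : A5} (hg : ∃ τ : Equiv.Perm (Fin 5), τ * g.1 * τ⁻¹ = p) (hh : P h.1)
    (hgh : g * h ≠ h * g) : HasConj p T g h := by
  obtain ⟨τ, rfl⟩ := hg
  have hn : (alternatingGroup (Fin 5)).Normal := inferInstance
  obtain ⟨ρ, hρ, l, hl, hlT, hr⟩ := hT (τ * h.1 * τ⁻¹) (hn.conj_mem _ h.2 τ) (hP τ _ hh) (by
    intro e
    refine hgh (Subtype.ext ?_)
    have e : τ * (g.1 * h.1) * τ⁻¹ = τ * (h.1 * g.1) * τ⁻¹ := by simpa [mul_assoc] using e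
    exact mul_left_cancel (mul_right_cancel e))
  refine ⟨ρ * τ, ?_, l, hl, hlT, by simpa [mul_assoc] using hr⟩
  rw [show ρ * τ * g.1 * (ρ * τ)⁻¹ = ρ * (τ * g.1 * τ⁻¹) * ρ⁻¹ by group, hρ, mul_inv_cancel_right]

theorem exists_conj_two : ∀ g : Equiv.Perm (Fin 5), g ∈ alternatingGroup (Fin 5) → g ^ 2 = 1 →
    g ≠ 1 → ∃ τ, τ * g * τ⁻¹ = Equiv.swap 1 2 * Equiv.swap 3 4 := by
  simp only [Equiv.Perm.mem_alternatingGroup]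
  decide +kernel

theorem exists_conj_three : ∀ g : Equiv.Perm (Fin 5), g ∈ alternatingGroup (Fin 5) → g ^ 3 = 1 →
    g ≠ 1 → ∃ τ, τ * g * τ⁻¹ = Equiv.swap 2 3 * Equiv.swap 3 4 := by
  simp only [Equiv.Perm.mem_alternatingGroup]
  decide +kernel

theorem exists_conj_five : ∀ g : Equiv.Perm (Fin 5), g ∈ alternatingGroup (Fin 5) → g ^ 2 ≠ 1 →
    g ^ 3 ≠ 1 → ∃ τ, τ * g * τ⁻¹ = finRotate 5 := by
  simp only [Equiv.Perm.mem_alternatingGroup]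
  decide +kernel

theorem hasConj_two {g h : A5} (hg : g ^ 2 = 1) (hgh : g * h ≠ h * g) :
    HasConj (Equiv.swap 1 2 * Equiv.swap 3 4) [1, 12, 13, 15, 16, 18, 19, 20] g h := by
  refine .of_conj (P := fun _ => True) (fun _ _ _ => trivial) ?_
    (exists_conj_two g.1 g.2 (congrArg Subtype.val hg) fun h1 => ?_) trivial hgh
  · simp only [Equiv.Perm.mem_alternatingGroup]
    decide +kernel
  · obtain rfl : g = 1 := Subtype.ext h1
    simp at hgh

theorem conj_pow_ne_one {G : Type*} [Group G] (m : ℕ) (τ h : G) (hh : h ^ m ≠ 1) :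
    (τ * h * τ⁻¹) ^ m ≠ 1 := by
  rwa [conj_pow, Ne, conj_eq_one_iff]

theorem hasConj_three {g h : A5} (hg : g ^ 3 = 1) (hh : h ^ 2 ≠ 1) (hgh : g * h ≠ h * g) :
    HasConj (Equiv.swap 2 3 * Equiv.swap 3 4) [4, 5, 15, 16, 17, 31, 32] g h := by
  refine .of_conj (P := fun h => h ^ 2 ≠ 1) (conj_pow_ne_one 2) ?_
    (exists_conj_three g.1 g.2 (congrArg Subtype.val hg) fun h1 => ?_)
    (fun e => hh (Subtype.ext e)) hgh
  · simp only [Equiv.Perm.mem_alternatingGroup]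
    decide +kernel
  · obtain rfl : g = 1 := Subtype.ext h1
    simp at hgh

theorem hasConj_five {g h : A5} (hg : g ^ 2 ≠ 1) (hg' : g ^ 3 ≠ 1) (hh : h ^ 2 ≠ 1)
    (hh' : h ^ 3 ≠ 1) (hgh : g * h ≠ h * g) : HasConj (finRotate 5) [17, 18, 21, 26] g h := by
  refine .of_conj (P := fun h => h ^ 2 ≠ 1 ∧ h ^ 3 ≠ 1)
    (fun τ h hh => ⟨conj_pow_ne_one 2 τ h hh.1, conj_pow_ne_one 3 τ h hh.2⟩) ?_
    (exists_conj_five g.1 g.2 (fun e => hg (Subtype.ext e)) fun e => hg' (Subtype.ext e))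
    ⟨fun e => hh (Subtype.ext e), fun e => hh' (Subtype.ext e)⟩ hgh
  simp only [Equiv.Perm.mem_alternatingGroup]
  decide +kernel

/-- The script refutes the existence of rigid sequences of elements in `ls` with first element
coded by `c` and second element coded by an entry of `l`. -/
def Refutes (ls : List Letter) (c : ℕ) (l : List ℕ) : Prop :=
  run ls script (2 ^ l.length - 1) [initCol l, initCol (List.replicate l.length c)] = true

instance (ls : List Letter) (c : ℕ) (l : List ℕ) : Decidable (Refutes ls c l) :=
  inferInstanceAs (Decidable (_ = true))

set_option maxRecDepth 100000 in
set_option maxHeartbeats 8000000 in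
theorem refutes :
    (∀ l ∈ [[1], [12], [13], [15], [16], [18], [19], [20]], Refutes letters 3 l) ∧
    (∀ l ∈ [[4, 5, 15], [16, 17], [31, 32]], Refutes letters3 1 l) ∧
    ∀ l ∈ [[17, 18, 21, 26]], Refutes letters5 16 l := by
  simp only [List.forall_mem_cons, List.not_mem_nil, false_imp_iff, implies_true, and_true]
  refine ⟨⟨?_, ?_, ?_, ?_, ?_, ?_, ?_, ?_⟩, ⟨?_, ?_, ?_⟩, ?_⟩
  · decide +kernel
  · decide +kernel
  · decide +kernel
  · decide +kernel
  · decide +kernel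
  · decide +kernel
  · decide +kernel
  · decide +kernel
  · decide +kernel
  · decide +kernel
  · decide +kernel
  · decide +kernel

theorem Rigid.not_hasConj {x : ℕ → A5} (hx : Rigid x) {ls : List Letter} (hls : ls.length ≤ 64)
    (hl : ∀ (φ : A5 ≃* A5) (i : ℕ), ∃ l ∈ ls, l ∈ letters ∧ l.Rep (φ (x i)))
    {p : Equiv.Perm (Fin 5)} {c : ℕ} (hp : ∃ l ∈ letters, l.code = c ∧ ∀ r, l.fn.get r = p r)
    {L : List (List ℕ)} (hL : ∀ l ∈ L, Refutes ls c l) : ¬ HasConj p L.flatten (x 0) (x 1) := by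
  rintro ⟨τ, hτ, l, hll, hlL, hr⟩
  obtain ⟨t, ht, hlt⟩ := List.mem_flatten.1 hlL
  obtain ⟨n, hn, hnt⟩ := List.getElem_of_mem hlt
  obtain ⟨m, hm, hmc, hmp⟩ := hp
  let φ : A5 ≃* A5 := MulAut.conjNormal τ
  have hφ (g : A5) : (φ g).1 = τ * g.1 * τ⁻¹ := MulAut.conjNormal_apply τ g
  have h0 : m.Rep (φ (x 0)) := fun r => by rw [hφ, hτ]; exact hmp r
  have h1 : l.Rep (φ (x 1)) := fun r => by rw [hφ]; exact hr r
  have hcols : RepCols (fun i => φ (x i)) n 2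
      [initCol t, initCol (List.replicate t.length c)] :=
    ⟨repCol_initCol hn hll hnt.symm h1,
      repCol_initCol (by simpa using hn) hm (by simpa using hmc) h0, rfl⟩
  have hv : (2 ^ t.length - 1).testBit n = true := by simpa using hn
  have h := run_eq_false (hx.map φ) hls (hl φ) validScript_script hv hcols
  have h' := hL t ht
  rw [Refutes, h] at h'
  exact Bool.false_ne_true h'

theorem map_pow_ne_one {G : Type*} [Group G] (φ : G ≃* G) {g : G} {m : ℕ} (h : g ^ m ≠ 1) :
    φ g ^ m ≠ 1 := by
  rwa [← map_pow, Ne, EmbeddingLike.map_eq_one_iff]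

theorem Closed.pow_two_ne_one {x : ℕ → A5} (hx : Closed x) (i : ℕ) : x i ^ 2 ≠ 1 := by
  intro h
  have hy := (hx.shift i).rigid
  refine hy.not_hasConj (ls := letters) (by decide)
    (fun φ j => ?_) (c := 3) (by decide +kernel) refutes.1
    (hasConj_two (by simpa using h) hy.not_commute)
  obtain ⟨l, hl, h⟩ := exists_letter _ (φ (x (j + i))).2
  exact ⟨l, hl, hl, h⟩

theorem Closed.pow_three_ne_one {x : ℕ → A5} (hx : Closed x) (i : ℕ) : x i ^ 3 ≠ 1 := by
  intro h
  have hy := (hx.shift i).rigid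
  exact hy.not_hasConj (ls := letters3) (by decide)
    (fun φ j => exists_letter3 (map_pow_ne_one φ (hx.pow_two_ne_one _)))
    (c := 1) (by decide +kernel) refutes.2.1
    (hasConj_three (by simpa using h) (hx.pow_two_ne_one _) hy.not_commute)

theorem not_closed (x : ℕ → A5) : ¬ Closed x := fun hx =>
  hx.rigid.not_hasConj (ls := letters5) (by decide)
    (fun φ j => exists_letter5 (map_pow_ne_one φ (hx.pow_two_ne_one _))
      (map_pow_ne_one φ (hx.pow_three_ne_one _)))
    (c := 16) (by decide +kernel) refutes.2.2
    (hasConj_five (hx.pow_two_ne_one _) (hx.pow_three_ne_one _) (hx.pow_two_ne_one _)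
      (hx.pow_three_ne_one _) hx.rigid.not_commute)

/-- The sequence of period nine whose first nine terms are those of `x` and the inverse of their
product. -/
def closure (x : Fin 8 → A5) (i : ℕ) : A5 :=
  if h : i % 9 < 8 then x ⟨i % 9, h⟩ else (List.ofFn x).prod⁻¹

theorem pr_closure (x : Fin 8 → A5) (f : Fin 8 → Fin 8) :
    pr (closure x) (List.ofFn fun i => (f i).1) = (List.ofFn (x ∘ f)).prod := by
  rw [pr, List.map_ofFn]
  congr 2
  funext i
  have h : (f i).1 % 9 = (f i).1 := Nat.mod_eq_of_lt (by omega)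
  simp [closure, h]

theorem ofFn_val : (List.ofFn fun i : Fin 8 => i.1) = List.range 8 := by decide

theorem pr_closure_range (x : Fin 8 → A5) :
    pr (closure x) (List.range 8) = (List.ofFn x).prod := by
  rw [← ofFn_val]
  exact pr_closure x id

theorem rigid_closure {x : Fin 8 → A5}
    (hx : ∀ σ : Equiv.Perm (Fin 8), (List.ofFn x).prod = (List.ofFn (x ∘ σ)).prod → σ = 1) :
    Rigid (closure x) := by
  intro w hw h
  have hlen : w.length = 8 := by simpa using hw.length_eq
  have hlt (i : Fin 8) : w[i.1] < 8 := by
    simpa using hw.subset (List.getElem_mem (by omega : i.1 < w.length))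
  let f : Fin 8 → Fin 8 := fun i => ⟨w[i.1], hlt i⟩
  have hf : Function.Injective f := fun i j hij => by
    have := (hw.nodup_iff.2 List.nodup_range).getElem_inj_iff.1 (congrArg Fin.val hij)
    exact Fin.ext this
  have hfw : (List.ofFn fun i => (f i).1) = w :=
    List.ext_getElem (by simp [hlen]) fun i _ _ => by rw [List.getElem_ofFn]
  have e := hx (Equiv.ofBijective f (Finite.injective_iff_bijective.1 hf)) (by
    rw [← hfw, pr_closure, pr_closure_range] at h
    exact h.symm)
  rw [← hfw, ← ofFn_val]
  congr 1
  funext i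
  exact congrArg Fin.val (Equiv.congr_fun e i)

theorem closed_closure {x : Fin 8 → A5}
    (hx : ∀ σ : Equiv.Perm (Fin 8), (List.ofFn x).prod = (List.ofFn (x ∘ σ)).prod → σ = 1) :
    Closed (closure x) := by
  refine ⟨rigid_closure hx, ?_, fun i => by simp [closure]⟩
  rw [show List.range 9 = List.range 8 ++ [8] from rfl, pr_append, pr_closure_range]
  have h8 : pr (closure x) [8] = (List.ofFn x).prod⁻¹ := mul_one _
  rw [h8, mul_inv_cancel]

end

end A5Rewrite

/-- The alternating group `A₅` satisfies the rewriting property `P₈`. -/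
theorem A5_rewritable_eight : RewProp (alternatingGroup (Fin 5)) 8 := by
  intro x
  by_contra h
  push Not at h
  exact A5Rewrite.not_closed _ (A5Rewrite.closed_closure fun σ hσ => by_contra fun hn => h σ hn hσ)
end

section
/- The alternating group A_5 satisfies the rewriting property P_10; that is, for every sequence of 10 elements x_1, ..., x_10 of A_5 there exists a non-identity permutation σ of {1,...,10} such that x_1 x_2 ⋯ x_10 = x_{σ(1)} x_{σ(2)} ⋯ x_{σ(10)}. -/
namespace Matrix

open Polynomial

variable {R n : Type*} [CommRing R] [Fintype n] [DecidableEq n]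

theorem derivative_det (A : Matrix n n R[X]) :
    derivative A.det = ∑ i, (A.updateCol i fun j => derivative (A j i)).det := by
  simp_rw [det_apply, derivative_sum, derivative_smul, derivative_prod_finset, Finset.smul_sum]
  rw [Finset.sum_comm]
  refine Finset.sum_congr rfl fun i _ => Finset.sum_congr rfl fun σ _ => ?_
  rw [← Finset.prod_erase_mul _ _ (Finset.mem_univ i), updateCol_self]
  congr 2
  refine Finset.prod_congr rfl fun j hj => ?_
  rw [updateCol_ne (Finset.ne_of_mem_erase hj)]

theorem derivative_charpoly (M : Matrix n n R) :
    derivative M.charpoly = M.charmatrix.adjugate.trace := by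
  rw [charpoly, derivative_det]
  refine Finset.sum_congr rfl fun i _ => ?_
  have : (fun j => derivative (M.charmatrix j i)) = Pi.single i 1 := by
    ext1 j
    obtain rfl | hj := eq_or_ne j i
    · simp
    · simp [hj]
  rw [this, ← cramer_apply, cramer_eq_adjugate_mulVec, mulVec_single_one, col_apply, diag_apply]

/-- A matrix all of whose positive powers have trace zero is nilpotent. -/
theorem pow_card_eq_zero_of_trace_pow_eq_zero (K : Type*) [Field K] [CharZero K] [Algebra K R]
    (M : Matrix n n R) (h : ∀ k, (M ^ (k + 1)).trace = 0) : M ^ Fintype.card n = 0 := by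
  nontriviality R
  have regular : ∀ (k : ℕ) (r : R), k ≠ 0 → (k : R) * r = 0 → r = 0 := by
    intro k r hk hr
    have hk' : (k : K) ≠ 0 := Nat.cast_ne_zero.mpr hk
    rw [← map_natCast (algebraMap K R), ← Algebra.smul_def] at hr
    simpa [hk'] using congrArg (fun z => (k : K)⁻¹ • z) hr
  set N := matPolyEquiv M.charmatrix.adjugate with hN
  have trace_coeff (k : ℕ) : (N.coeff k).trace = M.charpoly.coeff (k + 1) * (k + 1) := by
    rw [← coeff_derivative, derivative_charpoly]
    simp [trace, hN, matPolyEquiv_coeff_apply]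
  have mul_eq : N * (X - C M) = M.charpoly.map (algebraMap R (Matrix n n R)) := by
    rw [hN, ← matPolyEquiv_charmatrix, ← map_mul, adjugate_mul, ← charpoly, matPolyEquiv_smul_one]
  have coeff_eq (k : ℕ) : N.coeff k =
      N.coeff (k + 1) * M + algebraMap R (Matrix n n R) (M.charpoly.coeff (k + 1)) := by
    have := congrArg (fun p => p.coeff (k + 1)) mul_eq
    simp only [mul_sub, coeff_sub, coeff_mul_X, coeff_mul_C, coeff_map] at this
    rw [← this]; abel
  have mem_span (k : ℕ) : N.coeff k ∈ Submodule.span R (Set.range fun i : ℕ => M ^ i) := by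
    suffices ∀ j k, N.natDegree < k + j →
        N.coeff k ∈ Submodule.span R (Set.range fun i : ℕ => M ^ i) from
      this (N.natDegree + 1) k (by lia)
    intro j
    induction j with
    | zero =>
      intro k hk
      rw [coeff_eq_zero_of_natDegree_lt (by simpa using hk)]
      exact zero_mem _
    | succ j ih =>
      intro k hk
      rw [coeff_eq k, Algebra.algebraMap_eq_smul_one]
      refine add_mem ?_ (Submodule.smul_mem _ _ (Submodule.subset_span ⟨0, pow_zero M⟩))
      have := ih (k + 1) (by lia)
      generalize N.coeff (k + 1) = P at this
      induction this using Submodule.span_induction with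
      | mem P hP => obtain ⟨i, rfl⟩ := hP; exact Submodule.subset_span ⟨i + 1, pow_succ M i⟩
      | zero => simp
      | add P Q _ _ hP hQ => rw [add_mul]; exact add_mem hP hQ
      | smul r P _ hP => rw [smul_mul_assoc]; exact Submodule.smul_mem _ _ hP
  have trace_mul (k : ℕ) : (N.coeff k * M).trace = 0 := by
    have := mem_span k
    generalize N.coeff k = P at this
    induction this using Submodule.span_induction with
    | mem P hP => obtain ⟨i, rfl⟩ := hP; simpa [← pow_succ] using h i
    | zero => simp
    | add P Q _ _ hP hQ => rw [add_mul, trace_add, hP, hQ, add_zero]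
    | smul r P _ hP => rw [smul_mul_assoc, trace_smul, hP, smul_zero]
  have coeff_zero (k : ℕ) (hk : k < Fintype.card n) : M.charpoly.coeff k = 0 := by
    cases k with
    | zero =>
      have h0 := congrArg (fun p => (p.coeff 0).trace) mul_eq
      simp only [mul_sub, coeff_sub, mul_coeff_zero, coeff_X_zero, mul_zero, zero_sub, coeff_C_zero,
        trace_neg, trace_mul, coeff_map, Algebra.algebraMap_eq_smul_one, trace_smul, trace_one,
        smul_eq_mul] at h0
      exact regular _ _ hk.ne' (by rw [mul_comm, ← h0, neg_zero])
    | succ k =>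
      have hk' := congrArg trace (coeff_eq k)
      rw [trace_coeff, trace_add, trace_mul, Algebra.algebraMap_eq_smul_one, trace_smul, trace_one,
        smul_eq_mul] at hk'
      refine regular (Fintype.card n - (k + 1)) _ (by lia) ?_
      rw [Nat.cast_sub hk.le]
      push_cast
      linear_combination -hk'
  have charpoly_eq : M.charpoly = X ^ Fintype.card n := by
    ext k
    rw [coeff_X_pow]
    obtain hk | rfl | hk := lt_trichotomy k (Fintype.card n)
    · rw [coeff_zero k hk, if_neg hk.ne]
    · rw [if_pos rfl]
      simpa [leadingCoeff, charpoly_natDegree_eq_dim] using M.charpoly_monic.leadingCoeff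
    · rw [coeff_eq_zero_of_natDegree_lt (by rwa [charpoly_natDegree_eq_dim]), if_neg hk.ne']
  simpa [charpoly_eq] using aeval_self_charpoly M

end Matrix

namespace ExteriorAlgebra

variable {K V : Type*} [CommRing K] [AddCommGroup V] [Module K V]

theorem ι_mul_ι_mem_center (v w : V) :
    ι K v * ι K w ∈ Subalgebra.center K (ExteriorAlgebra K V) := by
  rw [Subalgebra.mem_center_iff]
  intro z
  have swap (a b : V) : ι K a * ι K b = -(ι K b * ι K a) :=
    eq_neg_of_add_eq_zero_left (ι_add_mul_swap a b)
  induction z using ExteriorAlgebra.induction with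
  | algebraMap r => exact Algebra.commutes _ _
  | ι u => rw [← mul_assoc, swap u v, neg_mul, mul_assoc, swap u w, mul_neg, neg_neg, mul_assoc]
  | mul a b ha hb => rw [mul_assoc, hb, ← mul_assoc, ha, mul_assoc]
  | add a b ha hb => rw [add_mul, mul_add, ha, hb]

end ExteriorAlgebra

namespace Matrix

variable {K V n : Type*} [Field K] [AddCommGroup V] [Module K V] [Fintype n] [DecidableEq n]

theorem list_prod_map_smul_map {α E : Type*} [Ring E] [Algebra K E] (e : α → E)
    (x : α → Matrix n n K) (l : List α) :
    (l.map fun a => e a • (x a).map (algebraMap K E)).prod =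
      (l.map e).prod • (l.map x).prod.map (algebraMap K E) := by
  induction l with
  | nil => simp
  | cons a l ih =>
    simp only [List.map_cons, List.prod_cons, ih]
    ext i j
    simp only [mul_apply, smul_apply, map_apply, smul_eq_mul, map_sum, map_mul, Finset.mul_sum]
    refine Finset.sum_congr rfl fun k _ => ?_
    rw [mul_assoc, ← mul_assoc (algebraMap K E _), Algebra.commutes, mul_assoc, mul_assoc]

open ExteriorAlgebra in
/-- A matrix of vectors, regarded as a matrix over the exterior algebra, is nilpotent. -/
theorem pow_map_ι_eq_zero [CharZero K] (v : Matrix n n V) :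
    (v.map (ι K)) ^ (2 * Fintype.card n) = 0 := by
  set A := v.map (ι K)
  let B : Matrix n n (Subalgebra.center K (ExteriorAlgebra K V)) := fun i j =>
    ⟨(A * A) i j, by
      rw [mul_apply]; exact sum_mem fun l _ => ι_mul_ι_mem_center _ _⟩
  let val := (Subalgebra.center K (ExteriorAlgebra K V)).val
  have map_B (k : ℕ) : (B ^ k).map val = (A * A) ^ k := by
    rw [← AlgHom.mapMatrix_apply, map_pow]; rfl
  have hB : B ^ Fintype.card n = 0 := by
    refine pow_card_eq_zero_of_trace_pow_eq_zero K B fun k => ?_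
    have val_trace : val (B ^ (k + 1)).trace = ((A * A) ^ (k + 1)).trace := by
      rw [AddMonoidHom.map_trace]
      exact congrArg trace (map_B (k + 1))
    have h1 : ((A * A) ^ (k + 1)).trace =
        ∑ j, ∑ l, ∑ i, val ((B ^ k) j l) * (A l i * A i j) := by
      rw [pow_succ, ← map_B]
      simp [trace, mul_apply, Finset.mul_sum]
    have h2 : ((A * A) ^ (k + 1)).trace =
        ∑ j, ∑ l, ∑ i, val ((B ^ k) j l) * (A i j * A l i) := by
      have : Commute A ((A * A) ^ k) := ((Commute.refl A).mul_right (Commute.refl A)).pow_right k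
      rw [pow_succ, ← mul_assoc, ← this.eq, mul_assoc, ← map_B]
      simp only [trace, diag_apply, mul_apply, Finset.mul_sum, map_apply]
      rw [Finset.sum_comm]
      refine Finset.sum_congr rfl fun j _ => ?_
      rw [Finset.sum_comm]
      refine Finset.sum_congr rfl fun l _ => Finset.sum_congr rfl fun i _ => ?_
      rw [← mul_assoc, ← mul_assoc]
      exact congrArg (· * A l i) (Subalgebra.mem_center_iff.mp ((B ^ k) j l).2 (A i j))
    have anticomm (i j l : n) : A l i * A i j + A i j * A l i = 0 := ι_add_mul_swap _ _
    have h3 : ((A * A) ^ (k + 1)).trace + ((A * A) ^ (k + 1)).trace = 0 := by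
      nth_rewrite 1 [h1]
      rw [h2]
      simp only [← Finset.sum_add_distrib, ← mul_add, anticomm, mul_zero, Finset.sum_const_zero]
    refine Subtype.val_injective ?_
    change val _ = 0
    rw [val_trace]
    rw [← two_smul K, smul_eq_zero_iff_right two_ne_zero] at h3
    exact h3
  rw [pow_mul, pow_two, ← map_B, hB]
  simp

open ExteriorAlgebra in
/-- The **Amitsur–Levitzki theorem** in characteristic zero. -/
theorem sum_sign_smul_prod_eq_zero [CharZero K] {m : ℕ} (hm : 2 * Fintype.card n ≤ m)
    (x : Fin m → Matrix n n K) :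
    ∑ σ : Equiv.Perm (Fin m), (Equiv.Perm.sign σ : K) • (List.ofFn (x ∘ σ)).prod = 0 := by
  let E := ExteriorAlgebra K (Fin m → K)
  let b : Fin m → Fin m → K := fun l => Pi.single l 1
  let A : Matrix n n E := (of fun i j l => x l i j).map (ι K)
  have hA : A = ∑ l, ι K (b l) • (x l).map (algebraMap K E) := by
    ext i j
    rw [sum_apply]
    change ι K (fun l => x l i j) = _
    rw [pi_eq_sum_univ' (fun l => x l i j), map_sum]
    refine Finset.sum_congr rfl fun l _ => ?_
    rw [map_smul, Algebra.smul_def, Algebra.commutes]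
    rfl
  have expand : A ^ m = ∑ f : Fin m → Fin m,
      ιMulti K m (b ∘ f) • (List.ofFn (x ∘ f)).prod.map (algebraMap K E) := by
    have := (MultilinearMap.mkPiAlgebraFin K m (Matrix n n E)).map_sum
      (fun (_ : Fin m) l => ι K (b l) • (x l).map (algebraMap K E))
    rw [← hA, MultilinearMap.mkPiAlgebraFin_apply_const] at this
    rw [this]
    refine Finset.sum_congr rfl fun f _ => ?_
    have := list_prod_map_smul_map (fun l => ι K (b l)) x (List.ofFn f)
    rw [List.map_ofFn, List.map_ofFn, List.map_ofFn] at this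
    rw [MultilinearMap.mkPiAlgebraFin_apply, ιMulti_apply]
    exact this
  let φ : E →ₗ[K] K := liftAlternating (Pi.single m detRowAlternating)
  have φ_apply (f : Fin m → Fin m) (c : K) :
      φ (ιMulti K m (b ∘ f) * algebraMap K E c) = det (of (b ∘ f)) * c := by
    rw [← Algebra.commutes, ← Algebra.smul_def, map_smul, liftAlternating_apply_ιMulti,
      Pi.single_eq_same, smul_eq_mul, mul_comm]
    rfl
  have hA_zero : A ^ m = 0 := pow_eq_zero_of_le hm (pow_map_ι_eq_zero _)
  have sum_eq : ∑ f : Fin m → Fin m, det (of (b ∘ f)) • (List.ofFn (x ∘ f)).prod = 0 := by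
    ext i j
    have := congrArg (fun M : Matrix n n E => φ (M i j)) (expand.symm.trans hA_zero)
    simpa [sum_apply, φ_apply] using this
  rw [← sum_eq]
  refine Fintype.sum_of_injective (fun σ : Equiv.Perm (Fin m) => ⇑σ) DFunLike.coe_injective _ _
    (fun f hf => ?_) fun σ => ?_
  · have : ¬ Function.Injective f := fun hinj =>
      hf ⟨Equiv.ofBijective f (Finite.injective_iff_bijective.mp hinj), rfl⟩
    obtain ⟨i, j, heq, hne⟩ : ∃ i j, f i = f j ∧ i ≠ j := by
      simpa [Function.Injective] using this
    rw [det_zero_of_row_eq hne (show b (f i) = b (f j) by rw [heq]), zero_smul]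
  · have : of (b ∘ σ) = (1 : Matrix (Fin m) (Fin m) K).submatrix σ id := by
      ext i j
      simp [b, one_apply, Pi.single_apply, eq_comm]
    rw [this, det_permute, det_one, mul_one]

end Matrix

namespace MonoidAlgebra

variable {k G : Type*} [Group G]

theorem mem_center_iff_coeff_mul_comm [CommRing k] (a : MonoidAlgebra k G) :
    a ∈ Subalgebra.center k (MonoidAlgebra k G) ↔
      ∀ g h : G, a.coeff (g * h) = a.coeff (h * g) := by
  rw [Subalgebra.mem_center_iff]
  constructor
  · intro ha g h
    simpa using congrArg (fun b => b.coeff h) (ha (single g⁻¹ 1))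
  · intro ha b
    induction b using induction_linear with
    | zero => simp
    | add b c hb hc => rw [add_mul, mul_add, hb, hc]
    | single g r =>
      ext h
      rw [coeff_single_mul_apply, coeff_mul_single_apply, ha, mul_comm]

theorem finrank_center (k : Type*) [Field k] [Finite G] :
    Module.finrank k (Subalgebra.center k (MonoidAlgebra k G)) = Nat.card (ConjClasses G) := by
  have := Fintype.ofFinite (ConjClasses G)
  let f : (ConjClasses G → k) →ₗ[k] MonoidAlgebra k G :=
    (coeffLinearEquiv k).symm.toLinearMap ∘ₗ
      (Finsupp.linearEquivFunOnFinite k k G).symm.toLinearMap ∘ₗ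
        LinearMap.funLeft k k ConjClasses.mk
  have coeff_f (c : ConjClasses G → k) (g : G) : (f c).coeff g = c (ConjClasses.mk g) := rfl
  have hf : Function.Injective f := fun c c' h => by
    ext q
    obtain ⟨g, rfl⟩ := ConjClasses.mk_surjective q
    rw [← coeff_f c, h, coeff_f]
  have hrange : LinearMap.range f =
      Subalgebra.toSubmodule (Subalgebra.center k (MonoidAlgebra k G)) := by
    ext a
    rw [Subalgebra.mem_toSubmodule, mem_center_iff_coeff_mul_comm]
    constructor
    · rintro ⟨c, rfl⟩ g h
      rw [coeff_f, coeff_f, ConjClasses.mk_eq_mk_iff_isConj.mpr]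
      exact isConj_iff.mpr ⟨h, by group⟩
    · intro ha
      refine ⟨Quotient.lift a.coeff fun g h hgh => ?_, ?_⟩
      · obtain ⟨c, rfl⟩ := isConj_iff.mp hgh
        rw [ha, inv_mul_cancel_left]
      · ext g
        rfl
  have := LinearMap.finrank_range_of_inj hf
  rw [hrange, Module.finrank_fintype_fun_eq_card, ← Nat.card_eq_fintype_card] at this
  exact this

end MonoidAlgebra

namespace Matrix

theorem finrank_center_pi (k : Type*) [Field k] {r : ℕ} (d : Fin r → ℕ) [∀ i, NeZero (d i)] :
    Module.finrank k (Subalgebra.center k (∀ i, Matrix (Fin (d i)) (Fin (d i)) k)) = r := by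
  let f : (Fin r → k) →ₗ[k] ∀ i, Matrix (Fin (d i)) (Fin (d i)) k :=
    LinearMap.pi fun i => (scalarAlgHom (Fin (d i)) k).toLinearMap ∘ₗ LinearMap.proj i
  have hf : Function.Injective f := fun c c' h => by
    ext i
    exact (scalar_inj (n := Fin (d i))).mp (congrFun h i)
  have hrange : LinearMap.range f =
      Subalgebra.toSubmodule (Subalgebra.center k (∀ i, Matrix (Fin (d i)) (Fin (d i)) k)) := by
    ext a
    rw [Subalgebra.mem_toSubmodule, Subalgebra.center_pi, Subalgebra.mem_pi]
    have mem_center (i) : a i ∈ Subalgebra.center k (Matrix (Fin (d i)) (Fin (d i)) k) ↔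
        ∃ c, scalar (Fin (d i)) c = a i := by
      rw [← SetLike.mem_coe, Subalgebra.coe_center]
      change a i ∈ Set.center _ ↔ _
      rw [center_eq_range, Set.mem_range]
    simp only [mem_center, Set.mem_univ, forall_const]
    rw [Classical.skolem]
    exact exists_congr fun c => funext_iff
  have := LinearMap.finrank_range_of_inj hf
  rw [hrange, Module.finrank_fin_fun] at this
  exact this

end Matrix

theorem AlgEquiv.finrank_center_eq {k A B : Type*} [Field k] [Ring A] [Algebra k A] [Ring B]
    [Algebra k B] (e : A ≃ₐ[k] B) :
    Module.finrank k (Subalgebra.center k A) = Module.finrank k (Subalgebra.center k B) := by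
  refine (e.toLinearEquiv.ofSubmodules (Subalgebra.toSubmodule (Subalgebra.center k A))
    (Subalgebra.toSubmodule (Subalgebra.center k B)) ?_).finrank_eq
  ext b
  rw [Submodule.mem_map_equiv, Subalgebra.mem_toSubmodule, Subalgebra.mem_toSubmodule,
    Subalgebra.mem_center_iff, Subalgebra.mem_center_iff, e.symm.surjective.forall]
  change (∀ c, e.symm c * e.symm b = e.symm b * e.symm c) ↔ _
  simp only [← map_mul, e.symm.injective.eq_iff]

/-- Over the complex numbers, a group algebra is a product of matrix algebras whose degrees satisfy
the two standard numerical constraints. -/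
theorem MonoidAlgebra.exists_algEquiv_pi_matrix (G : Type*) [Group G] [Finite G] :
    ∃ d : Fin (Nat.card (ConjClasses G)) → ℕ, (∀ i, 0 < d i) ∧ ∑ i, d i ^ 2 = Nat.card G ∧
      Nonempty (MonoidAlgebra ℂ G ≃ₐ[ℂ] ∀ i, Matrix (Fin (d i)) (Fin (d i)) ℂ) := by
  obtain ⟨r, d, hd, ⟨e⟩⟩ :=
    IsSemisimpleRing.exists_algEquiv_pi_matrix_of_isAlgClosed ℂ (MonoidAlgebra ℂ G)
  have hr : r = Nat.card (ConjClasses G) := by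
    rw [← MonoidAlgebra.finrank_center ℂ, ← Matrix.finrank_center_pi ℂ d]
    exact e.finrank_center_eq.symm
  subst hr
  refine ⟨d, fun i => Nat.pos_of_neZero _, ?_, ⟨e⟩⟩
  have := Fintype.ofFinite G
  have hrank := e.toLinearEquiv.finrank_eq
  rw [(MonoidAlgebra.coeffLinearEquiv ℂ).finrank_eq, Module.finrank_finsupp_self,
    Module.finrank_pi_fintype] at hrank
  simpa [Module.finrank_matrix, pow_two] using hrank.symm

/-- A group whose complex irreducible representations have degree at most `m / 2` satisfies `Pₘ`. -/
theorem RewProp.of_algEquiv_pi_matrix {G : Type*} [Group G] {ι : Type*} {d : ι → ℕ} {m : ℕ}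
    (e : MonoidAlgebra ℂ G ≃ₐ[ℂ] ∀ i, Matrix (Fin (d i)) (Fin (d i)) ℂ)
    (hd : ∀ i, 2 * d i ≤ m) : RewProp G m := by
  intro x
  by_contra! hx
  have key : ∑ σ : Equiv.Perm (Fin m), (Equiv.Perm.sign σ : ℂ) •
      MonoidAlgebra.of ℂ G (List.ofFn (x ∘ σ)).prod = 0 := by
    apply e.injective
    ext1 i
    have := Matrix.sum_sign_smul_prod_eq_zero (K := ℂ) (by simpa using hd i)
      (fun l => e (MonoidAlgebra.of ℂ G (x l)) i)
    simp only [map_sum, map_smul, map_zero, Finset.sum_apply, Pi.smul_apply, Pi.zero_apply]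
    rw [← this]
    refine Finset.sum_congr rfl fun σ _ => congrArg _ ?_
    let ψ : G →* Matrix (Fin (d i)) (Fin (d i)) ℂ :=
      (Pi.evalMonoidHom _ i).comp (e.toAlgHom.toRingHom.toMonoidHom.comp (MonoidAlgebra.of ℂ G))
    change ψ _ = _
    rw [map_list_prod, List.map_ofFn]
    rfl
  have hcoeff := congrArg (fun a => a.coeff (List.ofFn x).prod) key
  simp only [MonoidAlgebra.coeff_sum, Finsupp.finsetSum_apply, MonoidAlgebra.coeff_smul_apply,
    MonoidAlgebra.of_apply, MonoidAlgebra.coeff_zero, Finsupp.zero_apply] at hcoeff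
  rw [Finset.sum_eq_single 1] at hcoeff
  · simp at hcoeff
  · intro σ _ hσ
    simp [(hx σ hσ).symm]
  · simp

theorem nat_card_alternatingGroup_five : Nat.card (alternatingGroup (Fin 5)) = 60 := by
  rw [nat_card_alternatingGroup, Nat.card_fin]
  rfl

set_option maxRecDepth 10000 in
theorem nat_card_conjClasses_alternatingGroup_five :
    Nat.card (ConjClasses (alternatingGroup (Fin 5))) = 5 := by
  have hcomm : ∑ g : alternatingGroup (Fin 5),
      (Finset.univ.filter fun h : alternatingGroup (Fin 5) => g * h = h * g).card = 300 := by
    decide +kernel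
  have := card_comm_eq_card_conjClasses_mul_card (alternatingGroup (Fin 5))
  rw [nat_card_alternatingGroup_five, Nat.card_congr (Equiv.subtypeProdEquivSigmaSubtype Commute),
    Nat.card_sigma] at this
  simp only [Nat.card_eq_fintype_card (α := { _h : alternatingGroup (Fin 5) // _ }),
    Fintype.card_subtype, commute_iff_eq, hcomm] at this
  lia

theorem le_five_of_sum_sq_eq_sixty {r : ℕ} (hr : r = 5) (d : Fin r → ℕ) (hpos : ∀ i, 0 < d i)
    (hsum : ∑ i, d i ^ 2 = 60) (i : Fin r) : d i ≤ 5 := by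
  subst hr
  have hlt (j) : d j < 8 := by
    have := Finset.single_le_sum (f := fun i => d i ^ 2) (fun _ _ => Nat.zero_le _)
      (Finset.mem_univ j)
    simp only [hsum] at this
    nlinarith
  have key : ∀ a b c d : Fin 8, 0 < a → 0 < b → 0 < c → 0 < d →
      a.val ^ 2 + b.val ^ 2 + c.val ^ 2 + d.val ^ 2 ≠ 24 ∧
      a.val ^ 2 + b.val ^ 2 + c.val ^ 2 + d.val ^ 2 ≠ 11 := by
    decide +kernel
  rw [Fin.sum_univ_succAbove _ i, Fin.sum_univ_four] at hsum
  obtain ⟨h24, h11⟩ := key ⟨_, hlt _⟩ ⟨_, hlt _⟩ ⟨_, hlt _⟩ ⟨_, hlt _⟩ (hpos (i.succAbove 0))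
    (hpos (i.succAbove 1)) (hpos (i.succAbove 2)) (hpos (i.succAbove 3))
  have hi := hlt i
  by_contra! hgt
  obtain h | h : d i = 6 ∨ d i = 7 := by lia
  · rw [h] at hsum
    exact h24 (by lia)
  · rw [h] at hsum
    exact h11 (by lia)

/-- The alternating group `A₅` satisfies the rewriting property `P₁₀`. -/
theorem A5_rewritable_ten : RewProp (alternatingGroup (Fin 5)) 10 := by
  obtain ⟨d, hpos, hsum, ⟨e⟩⟩ := MonoidAlgebra.exists_algEquiv_pi_matrix (alternatingGroup (Fin 5))
  rw [nat_card_alternatingGroup_five] at hsum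
  exact RewProp.of_algEquiv_pi_matrix e fun i => Nat.mul_le_mul_left 2
    (le_five_of_sum_sq_eq_sixty nat_card_conjClasses_alternatingGroup_five d hpos hsum i)
end
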